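/- arXiv:2602.01440 — 3 statements merged into one kernel-verified Lean document; each statement's English description precedes it below -/
import Mathlib

section
/- Let R = k[[x,y,z]] over a field k, and let L be the cokernel of the map R² → R² given by the matrix [[z, y + Σ_{i≥1} x^{4i−2}], [y + Σ_{i≥1} x^{4i}, z]]. Then the two-term complex 0 → R² → R² → 0 given by this matrix is exact in positive degrees (i.e., the matrix is injective), L has depth 2, and L ⊗_R R/(x²,y²) is isomorphic to the R/(x²,y²)-module presented by the matrix [[z, y],[y, z]]. -/
open scoped Classical

/-- The depth of a module over a local ring: the supremum of lengths of `M`-regular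
sequences contained in the maximal ideal. -/
noncomputable def depth (R : Type*) [CommRing R] [IsLocalRing R] (M : Type*)
    [AddCommGroup M] [Module R M] : ℕ∞ :=
  sSup {n : ℕ∞ | ∃ rs : List R, (rs.length : ℕ∞) = n ∧
    (∀ r ∈ rs, r ∈ IsLocalRing.maximalIdeal R) ∧ RingTheory.Sequence.IsRegular M rs}

/-- The power series `∑_{i ∈ S} x₀^i` in `k[[x₀, x₁, x₂]]`. -/
noncomputable def xSeries (k : Type*) [Field k] (S : Set ℕ) : MvPowerSeries (Fin 3) k :=
  show ((Fin 3) →₀ ℕ) → k from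
    fun e => if ∃ i ∈ S, e = Finsupp.single (0 : Fin 3) i then 1 else 0

/-!
Write `adj Φ` for the adjugate of a square matrix `Φ` and `d = det Φ`. Since
`Φ * adj Φ = adj Φ * Φ = d`, the map `adj Φ` embeds `coker Φ` into `Rⁿ / d Rⁿ` as soon as `d` is
regular, so elements regular on `Rⁿ / d Rⁿ` are regular on `coker Φ`. Over a Noetherian local ring
regular sequences may be permuted, and induction shows that `rs` is regular on `coker Φ` whenever
`d :: rs` is regular on `R`. If moreover `d :: rs` generates an ideal primary to the maximal ideal,
then `coker Φ` modulo `rs` has dimension zero, so the depth of `coker Φ` is the length of `rs`.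

For `Φ = [[z, y + s₁], [y + s₂, z]]` with `s₁, s₂ ∈ (x², y²)`, the determinant
`d = z² - (y + s₁) (y + s₂)` is congruent to `z²` modulo `(x, y)`, so `d, x, y` is a regular
sequence of this kind because `x, y, z` is. Finally, `Φ` and `[[z, y], [y, z]]` agree modulo
`(x², y²)` and hence have the same cokernel there.
-/

open Function IsLocalRing RingTheory.Sequence

theorem le_annihilator_quotient_smul_top {R M : Type*} [CommRing R] [AddCommGroup M]
    [Module R M] (I : Ideal R) :
    I ≤ Module.annihilator R (M ⧸ I • (⊤ : Submodule R M)) := by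
  intro r hr
  rw [Submodule.annihilator_quotient, Submodule.mem_colon]
  exact fun v _ => Submodule.smul_mem_smul hr trivial

section Depth

variable {R M : Type*} [CommRing R] [IsLocalRing R] [AddCommGroup M] [Module R M]

theorem mem_maximalIdeal_of_isRegular {rs : List R} (h : IsRegular M rs) :
    ∀ r ∈ rs, r ∈ maximalIdeal R := by
  have hne : Ideal.ofList rs ≠ ⊤ := fun htop => h.top_ne_smul (by rw [htop, Submodule.top_smul])
  exact fun r hr => le_maximalIdeal hne (Ideal.subset_span hr)

theorem supportDim_nonpos_of_maximalIdeal_le_radical_annihilator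
    (h : maximalIdeal R ≤ (Module.annihilator R M).radical) : Module.supportDim R M ≤ 0 := by
  have support_eq : ∀ p ∈ Module.support R M, p.asIdeal = maximalIdeal R := fun p hp =>
    ((maximalIdeal.isMaximal R).eq_of_le p.2.ne_top
      (h.trans (p.2.radical_le_iff.mpr (Module.annihilator_le_of_mem_support hp)))).symm
  have : Subsingleton (Module.support R M) :=
    ⟨fun p q => Subtype.ext (PrimeSpectrum.ext
      ((support_eq p p.2).trans (support_eq q q.2).symm))⟩
  exact Order.krullDim_nonpos_of_subsingleton

variable [IsNoetherianRing R] [Module.Finite R M]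

theorem length_le_supportDim_of_isRegular {rs : List R} (h : IsRegular M rs) :
    (rs.length : WithBot ℕ∞) ≤ Module.supportDim R M := by
  have := h.quot_ofList_smul_nontrivial ⊤
  have : Nonempty (Module.support R (M ⧸ Ideal.ofList rs • (⊤ : Submodule R M))) :=
    Module.nonempty_support_of_nontrivial.to_subtype
  rw [← Module.supportDim_add_length_eq_supportDim_of_isRegular rs h]
  exact le_add_of_nonneg_left Order.krullDim_nonneg

theorem depth_eq_length_of_isRegular {rs : List R} (h : IsRegular M rs)
    (hann : maximalIdeal R ≤
      (Module.annihilator R (M ⧸ Ideal.ofList rs • (⊤ : Submodule R M))).radical) :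
    depth R M = rs.length := by
  have supportDim_le : Module.supportDim R M ≤ rs.length := by
    rw [← Module.supportDim_add_length_eq_supportDim_of_isRegular rs h]
    exact add_le_of_nonpos_left (supportDim_nonpos_of_maximalIdeal_le_radical_annihilator hann)
  refine le_antisymm (sSup_le ?_) (le_sSup ⟨rs, rfl, mem_maximalIdeal_of_isRegular h, h⟩)
  rintro _ ⟨rs', rfl, -, h'⟩
  exact_mod_cast (length_le_supportDim_of_isRegular h').trans supportDim_le

end Depth

section MatrixFactorization

open scoped Pointwise

variable {R F L : Type*} [CommRing R] [AddCommGroup F] [Module R F] [AddCommGroup L] [Module R L]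
  {f g : F →ₗ[R] F} {π : F →ₗ[R] L} {d : R}

theorem injective_of_comp_eq_smul_id (hgf : g ∘ₗ f = d • LinearMap.id) (hd : IsSMulRegular F d) :
    Injective f := by
  have hinj : Injective (g ∘ₗ f) := hgf ▸ hd
  exact Injective.of_comp (f := g) hinj

theorem isSMulRegular_of_exact_of_comp_eq_smul_id (hfg : f ∘ₗ g = d • LinearMap.id)
    (hgf : g ∘ₗ f = d • LinearMap.id) (hπ : Exact f π) (hsurj : Surjective π)
    (hd : IsSMulRegular F d) {r : R} (hr : IsSMulRegular (QuotSMulTop d F) r) :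
    IsSMulRegular L r := by
  rw [isSMulRegular_iff_right_eq_zero_of_smul]
  intro l hl
  obtain ⟨v, rfl⟩ := hsurj l
  obtain ⟨w, hw⟩ : ∃ w, f w = r • v := (hπ _).mp (by rw [map_smul, hl])
  have hgv : r • g v = d • w := by
    rw [← map_smul, ← hw]
    exact LinearMap.congr_fun hgf w
  obtain ⟨c, -, hc⟩ : g v ∈ d • (⊤ : Submodule R F) :=
    mem_of_isSMulRegular_quotient_of_smul_mem hr
      (hgv ▸ Submodule.smul_mem_pointwise_smul w d ⊤ trivial)
  have hv : f c = v := hd <|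
    calc d • f c = f (g v) := by rw [← map_smul]; exact congrArg f hc
      _ = d • v := LinearMap.congr_fun hfg v
  exact (hπ v).mpr ⟨c, hv⟩

theorem quotSMulTop_map_comp_eq_smul_id (r : R) (hfg : f ∘ₗ g = d • LinearMap.id) :
    QuotSMulTop.map r f ∘ₗ QuotSMulTop.map r g = d • LinearMap.id := by
  rw [← QuotSMulTop.map_comp, hfg, map_smul, QuotSMulTop.map_id]

theorem isWeaklyRegular_of_exact_of_comp_eq_smul_id [IsLocalRing R] [IsNoetherian R F]
    (hfg : f ∘ₗ g = d • LinearMap.id) (hgf : g ∘ₗ f = d • LinearMap.id) (hπ : Exact f π)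
    (hsurj : Surjective π) {rs : List R} (hreg : IsRegular F (d :: rs)) :
    IsWeaklyRegular L rs := by
  induction rs generalizing F L with
  | nil => exact .nil R L
  | cons r rs ih =>
    obtain ⟨hd, hr, -⟩ : IsSMulRegular F d ∧ IsSMulRegular (QuotSMulTop d F) r ∧
        IsRegular (QuotSMulTop r (QuotSMulTop d F)) rs := by
      simpa only [isRegular_cons_iff] using hreg
    have hswap : IsRegular (QuotSMulTop r F) (d :: rs) :=
      ((isRegular_cons_iff F r (d :: rs)).mp (isRegular_of_perm hreg (.swap r d rs))).2
    exact .cons (isSMulRegular_of_exact_of_comp_eq_smul_id hfg hgf hπ hsurj hd hr)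
      (ih (quotSMulTop_map_comp_eq_smul_id r hfg) (quotSMulTop_map_comp_eq_smul_id r hgf)
        (QuotSMulTop.map_exact r hπ hsurj) (QuotSMulTop.map_surjective r hsurj) hswap)

end MatrixFactorization

section Cokernel

theorem isWeaklyRegular_pi {R n : Type*} [CommRing R] [Finite n] {rs : List R}
    (h : IsWeaklyRegular R rs) : IsWeaklyRegular (n → R) rs :=
  ((TensorProduct.rid R (n → R)).isWeaklyRegular_congr rs).mp h.isWeaklyRegular_lTensor

variable {R n : Type*} [CommRing R] [Fintype n] [DecidableEq n] {Φ : Matrix n n R}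

theorem toLin'_comp_toLin'_adjugate :
    Matrix.toLin' Φ ∘ₗ Matrix.toLin' Φ.adjugate = Φ.det • LinearMap.id := by
  rw [← Matrix.toLin'_mul, Matrix.mul_adjugate, map_smul, Matrix.toLin'_one]

theorem toLin'_adjugate_comp_toLin' :
    Matrix.toLin' Φ.adjugate ∘ₗ Matrix.toLin' Φ = Φ.det • LinearMap.id := by
  rw [← Matrix.toLin'_mul, Matrix.adjugate_mul, map_smul, Matrix.toLin'_one]

theorem det_mem_annihilator_quotient_range_toLin' :
    Φ.det ∈ Module.annihilator R ((n → R) ⧸ LinearMap.range (Matrix.toLin' Φ)) := by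
  rw [Submodule.annihilator_quotient, Submodule.mem_colon]
  exact fun v _ => ⟨Φ.adjugate.toLin' v, LinearMap.congr_fun toLin'_comp_toLin'_adjugate v⟩

theorem nontrivial_quotient_range_toLin' (hdet : ¬ IsUnit Φ.det) :
    Nontrivial ((n → R) ⧸ LinearMap.range (Matrix.toLin' Φ)) := by
  rw [Submodule.Quotient.nontrivial_iff, Ne, LinearMap.range_eq_top]
  exact fun hsurj => hdet ((Matrix.isUnit_iff_isUnit_det Φ).mp
    (Matrix.mulVec_surjective_iff_isUnit.mp hsurj))

variable [IsLocalRing R] [IsNoetherianRing R]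

theorem isRegular_quotient_range_toLin' {rs : List R} (h : IsRegular R (Φ.det :: rs)) :
    IsRegular ((n → R) ⧸ LinearMap.range (Matrix.toLin' Φ)) rs := by
  obtain ⟨hdet, hrs⟩ := List.forall_mem_cons.mp (mem_maximalIdeal_of_isRegular h)
  have := nontrivial_quotient_range_toLin' hdet
  have : Nontrivial (n → R) :=
    (LinearMap.range (Matrix.toLin' Φ)).mkQ_surjective.nontrivial
  have hfree : IsRegular (n → R) (Φ.det :: rs) :=
    .of_isWeaklyRegular_of_mem_maximalIdeal _ (mem_maximalIdeal_of_isRegular h)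
      (isWeaklyRegular_pi h.toIsWeaklyRegular)
  exact .of_isWeaklyRegular_of_mem_maximalIdeal _ hrs
    (isWeaklyRegular_of_exact_of_comp_eq_smul_id toLin'_comp_toLin'_adjugate
      toLin'_adjugate_comp_toLin' (LinearMap.exact_map_mkQ_range _)
      (Submodule.mkQ_surjective _) hfree)

theorem depth_quotient_range_toLin' {rs : List R} (h : IsRegular R (Φ.det :: rs))
    (hrad : maximalIdeal R ≤ (Ideal.ofList (Φ.det :: rs)).radical) :
    depth R ((n → R) ⧸ LinearMap.range (Matrix.toLin' Φ)) = rs.length := by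
  refine depth_eq_length_of_isRegular (isRegular_quotient_range_toLin' h)
    (hrad.trans (Ideal.radical_mono ?_))
  rw [Ideal.ofList_cons, sup_le_iff, Ideal.span_singleton_le_iff_mem]
  refine ⟨LinearMap.annihilator_le_of_surjective _ (Submodule.mkQ_surjective _)
    det_mem_annihilator_quotient_range_toLin', le_annihilator_quotient_smul_top _⟩

end Cokernel

theorem det_sub_sq_mem {R : Type*} [CommRing R] {I : Ideal R} {z b c : R} (hb : b ∈ I) :
    (!![z, b; c, z] : Matrix (Fin 2) (Fin 2) R).det - z ^ 2 ∈ I := by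
  have det_sub_sq : (!![z, b; c, z] : Matrix (Fin 2) (Fin 2) R).det - z ^ 2 = -(b * c) := by
    rw [Matrix.det_fin_two_of]
    ring
  exact det_sub_sq ▸ neg_mem (I.mul_mem_right c hb)

section RegularSequence

theorem ofList_eq_of_perm {R : Type*} [Semiring R] {rs rs' : List R} (h : rs.Perm rs') :
    Ideal.ofList rs = Ideal.ofList rs' :=
  congrArg Ideal.span (Set.ext fun _ => h.mem_iff)

variable {R M : Type*} [CommRing R] [AddCommGroup M] [Module R M] {rs : List R} {d z : R} {n : ℕ}

theorem isSMulRegular_of_sub_mem_annihilator (hz : IsSMulRegular M z)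
    (hd : d - z ∈ Module.annihilator R M) : IsSMulRegular M d := by
  have hsmul : ∀ m : M, d • m = z • m := fun m => by
    rw [← sub_eq_zero, ← sub_smul, Module.mem_annihilator.mp hd]
  exact fun m m' hmm' => hz (by simpa only [hsmul] using hmm')

theorem isRegular_append_singleton_of_sub_pow_mem (h : IsRegular M (rs ++ [z])) (hn : n ≠ 0)
    (hd : d - z ^ n ∈ Ideal.ofList rs) : IsRegular M (rs ++ [d]) := by
  obtain ⟨hrs, hz⟩ := (isWeaklyRegular_append_iff M rs [z]).mp h.toIsWeaklyRegular
  rw [isWeaklyRegular_singleton_iff] at hz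
  have hle : Ideal.ofList (rs ++ [d]) ≤ Ideal.ofList (rs ++ [z]) := by
    rw [Ideal.ofList_append, Ideal.ofList_append, Ideal.ofList_singleton, Ideal.ofList_singleton]
    refine sup_le le_sup_left ((Ideal.span_singleton_le_iff_mem _).mpr ?_)
    rw [← sub_add_cancel d (z ^ n)]
    exact Submodule.add_mem_sup hd
      (Ideal.pow_mem_of_mem _ (Ideal.mem_span_singleton_self z) n (Nat.pos_of_ne_zero hn))
  refine ⟨(isWeaklyRegular_append_iff M rs [d]).mpr ⟨hrs, ?_⟩, fun htop => h.top_ne_smul ?_⟩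
  · rw [isWeaklyRegular_singleton_iff]
    exact isSMulRegular_of_sub_mem_annihilator (hz.pow n) (le_annihilator_quotient_smul_top _ hd)
  · exact le_antisymm (htop.trans_le (Submodule.smul_mono_left hle)) le_top

theorem ofList_append_singleton_le_radical_of_sub_pow_mem (hd : d - z ^ n ∈ Ideal.ofList rs) :
    Ideal.ofList (rs ++ [z]) ≤ (Ideal.ofList (rs ++ [d])).radical := by
  rw [Ideal.ofList_append, Ideal.ofList_append, Ideal.ofList_singleton, Ideal.ofList_singleton]
  refine sup_le (le_sup_left.trans Ideal.le_radical)
    ((Ideal.span_singleton_le_iff_mem _).mpr ⟨n, ?_⟩)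
  rw [← sub_sub_cancel d (z ^ n)]
  exact sub_mem (Ideal.mem_sup_right (Ideal.mem_span_singleton_self d)) (Ideal.mem_sup_left hd)

end RegularSequence

section Reduction

variable {R M : Type*} [CommRing R] [AddCommGroup M] [Module R M]

/-- The base change `(M / N) ⊗ R / I` of a quotient module, both sides being written as
quotients. -/
noncomputable def quotientQuotientSMulTopEquiv (N : Submodule R M) (I : Ideal R) :
    ((M ⧸ N) ⧸ I • (⊤ : Submodule R (M ⧸ N))) ≃ₗ[R] M ⧸ N ⊔ I • (⊤ : Submodule R M) :=
  Submodule.quotEquivOfEq _ _ (by rw [Submodule.map_smul'', Submodule.map_top,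
    Submodule.range_mkQ]) ≪≫ₗ Submodule.quotientQuotientEquivQuotientSup N (I • ⊤)

theorem range_sup_le_of_range_sub_le {F : Type*} [AddCommGroup F] [Module R F] {f g : F →ₗ[R] M}
    {P : Submodule R M} (h : LinearMap.range (f - g) ≤ P) :
    LinearMap.range f ⊔ P ≤ LinearMap.range g ⊔ P := by
  refine sup_le ?_ le_sup_right
  rintro _ ⟨v, rfl⟩
  rw [← add_sub_cancel (g v) (f v)]
  exact Submodule.add_mem_sup ⟨v, rfl⟩ (h ⟨v, rfl⟩)

theorem range_toLin'_le_smul_top {m n : Type*} [Finite m] [Fintype n] [DecidableEq n]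
    {A : Matrix m n R} {I : Ideal R} (hA : ∀ i j, A i j ∈ I) :
    LinearMap.range (Matrix.toLin' A) ≤ I • (⊤ : Submodule R (m → R)) := by
  have := Fintype.ofFinite m
  rintro _ ⟨v, rfl⟩
  rw [pi_eq_sum_univ' (Matrix.toLin' A v)]
  exact sum_mem fun i _ => Submodule.smul_mem_smul
    (sum_mem fun j _ => Ideal.mul_mem_right _ _ (hA i j)) trivial

theorem range_toLin'_sup_smul_top_eq {m n : Type*} [Finite m] [Fintype n] [DecidableEq n]
    {A B : Matrix m n R} {I : Ideal R} (h : ∀ i j, A i j - B i j ∈ I) :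
    LinearMap.range (Matrix.toLin' A) ⊔ I • (⊤ : Submodule R (m → R)) =
      LinearMap.range (Matrix.toLin' B) ⊔ I • (⊤ : Submodule R (m → R)) := by
  have range_sub_le : ∀ {A B : Matrix m n R}, (∀ i j, A i j - B i j ∈ I) →
      LinearMap.range (Matrix.toLin' A - Matrix.toLin' B) ≤ I • (⊤ : Submodule R (m → R)) :=
    fun {A B} h => map_sub Matrix.toLin' A B ▸ range_toLin'_le_smul_top h
  exact le_antisymm (range_sup_le_of_range_sub_le (range_sub_le h))
    (range_sup_le_of_range_sub_le (range_sub_le fun i j => sub_mem_comm_iff.mp (h i j)))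

end Reduction

section PowerSeries

open MvPowerSeries

variable {σ k : Type*} [CommRing k]

theorem exists_eq_add_X_mul (s : σ) (f : MvPowerSeries σ k) :
    ∃ f₀ q : MvPowerSeries σ k, f = f₀ + X s * q ∧
      ∀ m, coeff m f₀ = if m s = 0 then coeff m f else 0 := by
  let f₀ : MvPowerSeries σ k := fun m => if m s = 0 then coeff m f else 0
  have hf₀ : ∀ m, coeff m f₀ = if m s = 0 then coeff m f else 0 := fun _ => rfl
  obtain ⟨q, hq⟩ : X s ∣ f - f₀ := by
    rw [X_dvd_iff]
    intro m hm
    rw [map_sub, hf₀, if_pos hm, sub_self]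
  exact ⟨f₀, q, eq_add_of_sub_eq' hq, hf₀⟩

theorem mem_ofList_map_X_iff {l : List σ} {f : MvPowerSeries σ k} :
    f ∈ Ideal.ofList (l.map X) ↔ ∀ m : σ →₀ ℕ, (∀ i ∈ l, m i = 0) → coeff m f = 0 := by
  induction l generalizing f with
  | nil => simp [MvPowerSeries.ext_iff]
  | cons a l ih =>
    rw [List.map_cons, Ideal.ofList_cons, Ideal.mem_span_singleton_sup]
    constructor
    · rintro ⟨q, p, hp, rfl⟩ m hm
      obtain ⟨hma, hml⟩ := List.forall_mem_cons.mp hm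
      rw [map_add, ih.mp hp m hml, X_dvd_iff.mp (dvd_mul_left _ q) m hma, add_zero]
    · intro hf
      obtain ⟨f₀, q, hq, hf₀⟩ := exists_eq_add_X_mul a f
      refine ⟨q, f₀, ih.mpr fun m hml => ?_, by rw [hq, mul_comm, add_comm]⟩
      rw [hf₀]
      split_ifs with hma
      · exact hf m (List.forall_mem_cons.mpr ⟨hma, hml⟩)
      · rfl

theorem mem_ofList_map_X_of_X_mul_mem {l : List σ} {a : σ} (ha : a ∉ l) {f : MvPowerSeries σ k}
    (h : X a * f ∈ Ideal.ofList (l.map X)) : f ∈ Ideal.ofList (l.map X) := by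
  rw [mem_ofList_map_X_iff] at h ⊢
  intro m hm
  have hshift : ∀ i ∈ l, (Finsupp.single a 1 + m : σ →₀ ℕ) i = 0 := fun i hi => by
    rw [Finsupp.add_apply, hm i hi, Finsupp.single_eq_of_ne (ne_of_mem_of_not_mem hi ha)]
  simpa only [X_def, coeff_add_monomial_mul, one_mul] using h _ hshift

theorem isWeaklyRegular_map_X {l : List σ} (hl : l.Nodup) :
    IsWeaklyRegular (MvPowerSeries σ k) (l.map (X : σ → MvPowerSeries σ k)) := by
  induction l using List.reverseRecOn with
  | nil => exact .nil _ _
  | append_singleton l a ih =>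
    obtain ⟨ha, hl⟩ : a ∉ l ∧ l.Nodup := by
      simpa using (List.perm_append_singleton a l).nodup_iff.mp hl
    rw [List.map_append, List.map_singleton, isWeaklyRegular_append_iff,
      isWeaklyRegular_singleton_iff, smul_eq_mul, Ideal.mul_top]
    exact ⟨ih hl, (isSMulRegular_quotient_iff_mem_of_smul_mem _ _).mpr
      fun _ => mem_ofList_map_X_of_X_mul_mem ha⟩

theorem isRegular_map_X [Nontrivial k] {l : List σ} (hl : l.Nodup) :
    IsRegular (MvPowerSeries σ k) (l.map (X : σ → MvPowerSeries σ k)) := by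
  refine ⟨isWeaklyRegular_map_X hl, fun htop => ?_⟩
  rw [smul_eq_mul, Ideal.mul_top] at htop
  have hone : (1 : MvPowerSeries σ k) ∈ Ideal.ofList (l.map X) := htop ▸ Submodule.mem_top
  simpa using mem_ofList_map_X_iff.mp hone 0 fun _ _ => rfl

theorem maximalIdeal_le_ofList_map_X {k : Type*} [Field k] {l : List σ} (hl : ∀ i, i ∈ l) :
    maximalIdeal (MvPowerSeries σ k) ≤ Ideal.ofList (l.map X) := by
  intro f hf
  rw [mem_ofList_map_X_iff]
  intro m hm
  obtain rfl : m = 0 := Finsupp.ext fun i => hm i (hl i)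
  simpa [isUnit_iff_constantCoeff] using hf

theorem X_zero_pow_dvd_xSeries {k : Type*} [Field k] {S : Set ℕ} {n : ℕ} (hS : ∀ i ∈ S, n ≤ i) :
    (X 0 : MvPowerSeries (Fin 3) k) ^ n ∣ xSeries k S := by
  rw [X_pow_dvd_iff]
  intro m hm
  refine if_neg ?_
  rintro ⟨i, hi, rfl⟩
  rw [Finsupp.single_eq_same] at hm
  exact hm.not_ge (hS i hi)

theorem xSeries_mem_span {k : Type*} [Field k] {S : Set ℕ} {n : ℕ} (hS : ∀ i ∈ S, n ≤ i)
    (T : Set (MvPowerSeries (Fin 3) k)) : xSeries k S ∈ Ideal.span (insert (X 0 ^ n) T) :=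
  Ideal.mem_of_dvd _ (X_zero_pow_dvd_xSeries hS) (Ideal.subset_span (Set.mem_insert _ T))

end PowerSeries

theorem stmt9_general {R : Type*} [CommRing R] [IsLocalRing R] [IsNoetherianRing R]
    {x y z s₁ s₂ : R} (hreg : IsRegular R [x, y, z])
    (hrad : maximalIdeal R ≤ (Ideal.ofList [x, y, z]).radical)
    (hs₁ : s₁ ∈ Ideal.span {x ^ 2, y ^ 2}) (hs₂ : s₂ ∈ Ideal.span {x ^ 2, y ^ 2}) :
    letI Φ : Matrix (Fin 2) (Fin 2) R := !![z, y + s₁; y + s₂, z]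
    letI a : Ideal R := Ideal.span {x ^ 2, y ^ 2}
    letI L := (Fin 2 → R) ⧸ LinearMap.range (Matrix.toLin' Φ)
    Function.Injective (Matrix.toLin' Φ) ∧
    depth R L = 2 ∧
    Nonempty ((L ⧸ (a • (⊤ : Submodule R L))) ≃ₗ[R]
      ((Fin 2 → R) ⧸
        (LinearMap.range (Matrix.toLin' (!![z, y; y, z] : Matrix (Fin 2) (Fin 2) R)) ⊔
          a • (⊤ : Submodule R (Fin 2 → R))))) := by
  let Φ : Matrix (Fin 2) (Fin 2) R := !![z, y + s₁; y + s₂, z]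
  have hx : x ∈ Ideal.ofList [x, y] := Ideal.subset_span (by simp)
  have hy : y ∈ Ideal.ofList [x, y] := Ideal.subset_span (by simp)
  have hle : Ideal.span {x ^ 2, y ^ 2} ≤ Ideal.ofList [x, y] :=
    Ideal.span_le.mpr (Set.pair_subset (Ideal.pow_mem_of_mem _ hx 2 two_pos)
      (Ideal.pow_mem_of_mem _ hy 2 two_pos))
  have hdet : Φ.det - z ^ 2 ∈ Ideal.ofList [x, y] :=
    det_sub_sq_mem (add_mem hy (hle hs₁))
  have hperm : ([x, y] ++ [Φ.det]).Perm [Φ.det, x, y] := List.perm_append_singleton _ _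
  have hregΦ : IsRegular R [Φ.det, x, y] :=
    isRegular_of_perm
      (isRegular_append_singleton_of_sub_pow_mem (rs := [x, y]) hreg two_ne_zero hdet) hperm
  have hradΦ : maximalIdeal R ≤ (Ideal.ofList [Φ.det, x, y]).radical := by
    rw [← ofList_eq_of_perm hperm]
    exact hrad.trans (Ideal.radical_le_radical_iff.mpr
      (ofList_append_singleton_le_radical_of_sub_pow_mem (rs := [x, y]) hdet))
  have hentries : ∀ i j, Φ i j - !![z, y; y, z] i j ∈ Ideal.span {x ^ 2, y ^ 2} := by
    intro i j
    fin_cases i <;> fin_cases j <;> simp [Φ, hs₁, hs₂]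
  refine ⟨injective_of_comp_eq_smul_id toLin'_adjugate_comp_toLin' ?_,
    depth_quotient_range_toLin' hregΦ hradΦ, ⟨?_⟩⟩
  · exact ((isWeaklyRegular_cons_iff _ _ _).mp (isWeaklyRegular_pi hregΦ.toIsWeaklyRegular)).1
  · exact quotientQuotientSMulTopEquiv _ _ ≪≫ₗ
      Submodule.quotEquivOfEq _ _ (range_toLin'_sup_smul_top_eq hentries)

/-- Let `R = k[[x,y,z]]` and `L` the cokernel of the map `R² → R²` given
by `Φ = [[z, y + Σ_{i≥1} x^{4i−2}], [y + Σ_{i≥1} x^{4i}, z]]`.  Then `Φ` is injective (the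
two-term complex is exact in positive degrees), `depth L = 2`, and `L ⊗_R R/(x²,y²)` is
isomorphic to the `R/(x²,y²)`-module presented by `[[z, y], [y, z]]`. -/
theorem stmt9 (k : Type*) [Field k] :
    letI R := MvPowerSeries (Fin 3) k
    letI x : R := MvPowerSeries.X 0
    letI y : R := MvPowerSeries.X 1
    letI z : R := MvPowerSeries.X 2
    letI s₁ : R := xSeries k {m | ∃ i : ℕ, 1 ≤ i ∧ m = 4 * i - 2}
    letI s₂ : R := xSeries k {m | ∃ i : ℕ, 1 ≤ i ∧ m = 4 * i}
    letI Φ : Matrix (Fin 2) (Fin 2) R := !![z, y + s₁; y + s₂, z]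
    letI a : Ideal R := Ideal.span {x ^ 2, y ^ 2}
    letI L := (Fin 2 → R) ⧸ LinearMap.range (Matrix.toLin' Φ)
    Function.Injective (Matrix.toLin' Φ) ∧
    depth R L = 2 ∧
    Nonempty ((L ⧸ (a • (⊤ : Submodule R L))) ≃ₗ[R]
      ((Fin 2 → R) ⧸
        (LinearMap.range (Matrix.toLin' (!![z, y; y, z] : Matrix (Fin 2) (Fin 2) R)) ⊔
          a • (⊤ : Submodule R (Fin 2 → R))))) := by
  exact stmt9_general (isRegular_map_X (l := [0, 1, 2]) (by decide))
    ((maximalIdeal_le_ofList_map_X (l := [0, 1, 2]) (by decide)).trans Ideal.le_radical)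
    (xSeries_mem_span (by rintro _ ⟨i, hi, rfl⟩; lia) _)
    (xSeries_mem_span (by rintro _ ⟨i, hi, rfl⟩; lia) _)
end

section
/- Let (R, m) be a regular local ring and let a, b be ideals of R with √(a + b) = m. If a is an equimultiple ideal (i.e., its analytic spread equals its height) and b does not contain any minimal generator of a^n for some sufficiently large n (equivalently, b ∩ a^n ⊆ m·a^n for all large n), then dim(R/a) + dim(R/b) = dim R. -/
open Filter

/-- The minimal number of generators of an `R`-module. -/
noncomputable def minGen (R : Type*) [Semiring R] (M : Type*) [AddCommMonoid M]
    [Module R M] : ℕ :=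
  sInf {k | ∃ s : Finset M, s.card = k ∧ Submodule.span R (s : Set M) = ⊤}

/-- The height of an ideal: the infimum of the heights of the primes containing it. -/
noncomputable def idealHeight {R : Type*} [CommRing R] (a : Ideal R) : ℕ∞ :=
  ⨅ p : {p : PrimeSpectrum R // a ≤ p.asIdeal}, Order.height p.1

/-! If the partial sums of `k ↦ μ(a^k)` grow at most like `n^d`, the fibre cone `⨁ a^n / m a^n`
has dimension at most `d`, since its Noether normalization is a polynomial ring with at most `d`
variables. It is then nilpotent in positive degrees modulo `d` homogeneous elements of positive
degree; lifting these and applying Nakayama gives `J ≤ a ≤ √J` with `J` generated by `d` elements.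
Hence `dim R/I ≤ dim R/(I + a) + d` for every ideal `I`.

For `d = ht a` and `I = b` this reads `dim R/b ≤ ht a ≤ dim R - dim R/a`. Conversely, put
`d = dim R/b` and `I = 0`: since `b ∩ a^n ⊆ m a^n` for large `n`, the minimal generators of `a^n`
stay independent in `a^n / (a^n ∩ (b + m a^n))`, so the partial sums of `μ(a^k)` are bounded, up to
a constant, by the length of `R/(b + a^n)`, which grows at most like `n^d`. The result is
`dim R ≤ dim R/a + dim R/b`.
-/

open IsLocalRing

section RegularLocalRing

theorem exists_span_le_span_singleton_sup_span_erase {R M : Type*} [CommRing R] [IsLocalRing R]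
    [AddCommGroup M] [Module R M] [DecidableEq M] {s : Finset M} {x : M}
    (hx : x ∈ Submodule.span R (s : Set M))
    (hxm : x ∉ maximalIdeal R • Submodule.span R (s : Set M)) :
    ∃ y ∈ s, Submodule.span R (s : Set M) ≤
      Submodule.span R {x} ⊔ Submodule.span R (s.erase y : Set M) := by
  obtain ⟨c, -, rfl⟩ := Submodule.mem_span_finset.mp hx
  obtain ⟨y, hy, u, hu⟩ : ∃ y ∈ s, IsUnit (c y) := by
    by_contra! hc
    exact hxm (Submodule.sum_mem _ fun y hy =>
      Submodule.smul_mem_smul (hc y hy) (Submodule.subset_span hy))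
  refine ⟨y, hy, Submodule.span_le.mpr fun z hz => ?_⟩
  by_cases hzy : z = y
  · have hsub : (u : R) • z = ∑ i ∈ s, c i • i - ∑ i ∈ s.erase y, c i • i := by
      rw [← Finset.add_sum_erase _ _ hy, hzy, hu, add_sub_cancel_right]
    rw [SetLike.mem_coe, ← Submodule.smul_mem_iff_of_isUnit _ u.isUnit, hsub]
    exact sub_mem (Submodule.mem_sup_left (Submodule.mem_span_singleton_self _))
      (Submodule.mem_sup_right (Submodule.sum_mem _ fun i hi =>
        Submodule.smul_mem _ _ (Submodule.subset_span hi)))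
  · exact Submodule.mem_sup_right (Submodule.subset_span (by simp [hz, hzy]))

variable {R : Type*} [CommRing R]

theorem isLocalRing_quotient [IsLocalRing R] {I : Ideal R} (hI : I ≠ ⊤) : IsLocalRing (R ⧸ I) :=
  have := Ideal.Quotient.nontrivial_iff.mpr hI
  IsLocalRing.of_surjective' (Ideal.Quotient.mk I) Ideal.Quotient.mk_surjective

theorem map_quotientMk_maximalIdeal [IsLocalRing R] (I : Ideal R) [IsLocalRing (R ⧸ I)] :
    (maximalIdeal R).map (Ideal.Quotient.mk I) = maximalIdeal (R ⧸ I) := by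
  have := IsLocalHom.of_surjective _ (Ideal.Quotient.mk_surjective (I := I))
  rw [← maximalIdeal_comap (Ideal.Quotient.mk I),
    Ideal.map_comap_of_surjective _ Ideal.Quotient.mk_surjective]

theorem span_singleton_ne_top [IsLocalRing R] {x : R} (hx : x ∈ maximalIdeal R) :
    Ideal.span {x} ≠ ⊤ :=
  ne_top_of_le_ne_top Ideal.IsPrime.ne_top' ((Ideal.span_singleton_le_iff_mem _).mpr hx)

theorem spanFinrank_maximalIdeal_quotient_span_singleton_lt [IsNoetherianRing R] [IsLocalRing R]
    {x : R} (hx : x ∈ maximalIdeal R) (hx2 : x ∉ maximalIdeal R ^ 2)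
    [IsLocalRing (R ⧸ Ideal.span {x})] :
    (maximalIdeal (R ⧸ Ideal.span {x})).spanFinrank < (maximalIdeal R).spanFinrank := by
  classical
  obtain ⟨s, hcard, hspan⟩ :=
    (IsNoetherian.noetherian (maximalIdeal R)).exists_span_finset_card_eq_spanFinrank
  obtain ⟨y, hy, hle⟩ := exists_span_le_span_singleton_sup_span_erase
    (hspan.symm ▸ hx : x ∈ Submodule.span R (s : Set R)) (by rwa [hspan, smul_eq_mul, ← pow_two])
  have hmax : maximalIdeal (R ⧸ Ideal.span {x}) =
      Ideal.span (Ideal.Quotient.mk (Ideal.span {x}) '' (s.erase y : Set R)) := by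
    rw [← map_quotientMk_maximalIdeal, ← Ideal.map_span]
    refine le_antisymm ?_ (Ideal.map_mono ?_)
    · refine (Ideal.map_mono (hspan.ge.trans hle)).trans ?_
      exact (Ideal.map_sup _ _ _).trans_le (by simp [Ideal.map_quotient_self])
    · exact hspan ▸ Submodule.span_mono (Finset.erase_subset y s)
  calc (maximalIdeal (R ⧸ Ideal.span {x})).spanFinrank
      ≤ (Ideal.Quotient.mk (Ideal.span {x}) '' (s.erase y : Set R)).ncard :=
        hmax ▸ Submodule.spanFinrank_span_le_ncard_of_finite ((s.erase y).finite_toSet.image _)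
    _ ≤ (s.erase y).card := by
        rw [← Set.ncard_coe_finset]
        exact Set.ncard_image_le (s.erase y).finite_toSet
    _ < s.card := Finset.card_erase_lt_of_mem hy
    _ = (maximalIdeal R).spanFinrank := hcard

theorem isRegularLocalRing_quotient_span_singleton [IsRegularLocalRing R] {x : R}
    (hx : x ∈ maximalIdeal R) (hx2 : x ∉ maximalIdeal R ^ 2) :
    IsRegularLocalRing (R ⧸ Ideal.span {x}) := by
  have := isLocalRing_quotient (span_singleton_ne_top hx)
  refine .of_spanFinrank_maximalIdeal_le _ (ENat.WithBot.add_le_add_one_right_iff.mp ?_)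
  have hdim := ringKrullDim_le_ringKrullDim_quotient_add_encard ({x} : Set R)
    (by simpa [IsLocalRing.ringJacobson_eq_maximalIdeal] using hx)
  have hlt := spanFinrank_maximalIdeal_quotient_span_singleton_lt hx hx2
  calc ((maximalIdeal (R ⧸ Ideal.span {x})).spanFinrank : WithBot ℕ∞) + 1
      ≤ (maximalIdeal R).spanFinrank := by exact_mod_cast hlt
    _ = ringKrullDim R := IsRegularLocalRing.spanFinrank_maximalIdeal
    _ ≤ ringKrullDim (R ⧸ Ideal.span {x}) + 1 := by simpa using hdim

theorem exists_mem_maximalIdeal_notMem_sq_notMem_minimalPrimes [IsNoetherianRing R]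
    [IsLocalRing R] (hR : maximalIdeal R ∉ minimalPrimes R) :
    ∃ x ∈ maximalIdeal R, x ∉ maximalIdeal R ^ 2 ∧ ∀ P ∈ minimalPrimes R, x ∉ P := by
  classical
  by_contra! hcover
  have hfin := minimalPrimes.finite_of_isNoetherianRing R
  obtain ⟨I, hI, hle⟩ : ∃ I ∈ insert (maximalIdeal R ^ 2) hfin.toFinset, maximalIdeal R ≤ I := by
    refine (Ideal.subset_union_prime (f := id) (maximalIdeal R ^ 2) (maximalIdeal R ^ 2)
      fun P hP hne _ => ?_).mp fun x hx => ?_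
    · exact ((hfin.mem_toFinset.mp ((Finset.mem_insert.mp hP).resolve_left hne)).1).1
    · by_cases hx2 : x ∈ maximalIdeal R ^ 2
      · exact Set.mem_biUnion (Finset.mem_coe.mpr (Finset.mem_insert_self _ _)) hx2
      · obtain ⟨P, hP, hxP⟩ := hcover x hx hx2
        exact Set.mem_biUnion (Finset.mem_insert_of_mem (hfin.mem_toFinset.mpr hP)) hxP
  rcases Finset.mem_insert.mp hI with rfl | hI
  · have hbot : maximalIdeal R = ⊥ :=
      Submodule.eq_bot_of_le_smul_of_le_jacobson_bot (maximalIdeal R) _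
        (IsNoetherian.noetherian _) (by rwa [smul_eq_mul, ← pow_two]) (maximalIdeal_le_jacobson _)
    exact hR ⟨⟨inferInstance, bot_le⟩, fun _ _ _ => hbot.le.trans bot_le⟩
  · have hP := hfin.mem_toFinset.mp hI
    exact hR ((maximalIdeal.isMaximal R).eq_of_le hP.1.1.ne_top hle ▸ hP)

theorem isDomain_of_isPrime_span_singleton [IsNoetherianRing R] [IsLocalRing R] {x : R}
    (hx : x ∈ maximalIdeal R) (hprime : (Ideal.span {x}).IsPrime)
    (hmin : ∀ P ∈ minimalPrimes R, x ∉ P) : IsDomain R := by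
  obtain ⟨P, hP, hPx⟩ := Ideal.exists_minimalPrimes_le (bot_le : ⊥ ≤ Ideal.span {x})
  have hPprime : P.IsPrime := hP.1.1
  have hPbot : P = ⊥ := by
    refine Submodule.eq_bot_of_le_smul_of_le_jacobson_bot (Ideal.span {x}) P
      (IsNoetherian.noetherian _) (fun y hy => ?_)
      (((Ideal.span_singleton_le_iff_mem _).mpr hx).trans (maximalIdeal_le_jacobson _))
    obtain ⟨z, rfl⟩ := Ideal.mem_span_singleton'.mp (hPx hy)
    rw [mul_comm]
    exact Ideal.mul_mem_mul (Ideal.mem_span_singleton_self x)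
      ((hPprime.mem_or_mem hy).resolve_right (hmin P hP))
  have : (⊥ : Ideal R).IsPrime := hPbot ▸ hPprime
  exact IsDomain.of_bot_isPrime R

theorem isDomain_of_isRegularLocalRing (R : Type*) [CommRing R] [IsRegularLocalRing R] :
    IsDomain R := by
  induction hn : (maximalIdeal R).spanFinrank using Nat.strong_induction_on generalizing R with
  | h n ih =>
    by_cases hmin : maximalIdeal R ∈ minimalPrimes R
    · have hrank : (maximalIdeal R).spanFinrank = 0 := by
        have hdim := IsRegularLocalRing.spanFinrank_maximalIdeal (R := R)
        rw [← maximalIdeal_height_eq_ringKrullDim, Ideal.height_eq_zero_iff.mpr hmin] at hdim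
        exact_mod_cast hdim
      rw [Submodule.spanFinrank_eq_zero_iff_eq_bot (IsNoetherian.noetherian _)] at hrank
      exact (isField_iff_maximalIdeal_eq.mpr hrank).isDomain
    · obtain ⟨x, hx, hx2, hxmin⟩ := exists_mem_maximalIdeal_notMem_sq_notMem_minimalPrimes hmin
      have := isRegularLocalRing_quotient_span_singleton hx hx2
      have hdom := ih _ (hn ▸ spanFinrank_maximalIdeal_quotient_span_singleton_lt hx hx2)
        (R ⧸ Ideal.span {x}) rfl
      exact isDomain_of_isPrime_span_singleton hx
        ((Ideal.Quotient.isDomain_iff_prime _).mp hdom) hxmin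

theorem isDomain_of_exists_span_eq_maximalIdeal [IsNoetherianRing R] [IsLocalRing R]
    (h : ∃ s : Finset R, (s.card : WithBot ℕ∞) = ringKrullDim R ∧
      Ideal.span (s : Set R) = maximalIdeal R) : IsDomain R := by
  obtain ⟨s, hcard, hspan⟩ := h
  have hle := Submodule.spanFinrank_span_le_ncard_of_finite (R := R) s.finite_toSet
  rw [← Ideal.span, hspan, Set.ncard_coe_finset] at hle
  have : IsRegularLocalRing R :=
    .of_spanFinrank_maximalIdeal_le R (hcard ▸ by exact_mod_cast hle)
  exact isDomain_of_isRegularLocalRing R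

end RegularLocalRing

section KrullDimension

theorem idealHeight_eq_height {R : Type*} [CommRing R] (I : Ideal R) :
    idealHeight I = I.height := by
  refine le_antisymm ?_ (le_iInf fun p => ?_)
  · rw [I.height_eq_inf_minimalPrimes, idealHeight]
    refine le_iInf₂ fun P hP => ?_
    let p : PrimeSpectrum R := ⟨P, hP.1.1⟩
    exact (iInf_le _ (⟨p, hP.1.2⟩ : {p : PrimeSpectrum R // I ≤ p.asIdeal})).trans_eq
      p.height_eq_orderHeight.symm
  · exact (Ideal.height_mono p.2).trans_eq (PrimeSpectrum.height_eq_orderHeight p.1)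

theorem ringKrullDim_quotient_add_height_le {R : Type*} [CommRing R] (I : Ideal R) :
    ringKrullDim (R ⧸ I) + I.height ≤ ringKrullDim R := by
  by_cases hI : I = ⊤
  · simp [hI, ringKrullDim_eq_bot_of_subsingleton]
  have hne : Nonempty (PrimeSpectrum.zeroLocus (I : Set R)) := by
    rwa [Set.nonempty_coe_sort, Set.nonempty_iff_ne_empty, Ne,
      PrimeSpectrum.zeroLocus_empty_iff_eq_top]
  have := hne.map Subtype.val
  rw [ringKrullDim_quotient, ringKrullDim, Order.krullDim_eq_iSup_coheight_of_nonempty,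
    Order.krullDim_eq_iSup_height_add_coheight_of_nonempty, ← WithBot.coe_add, ENat.iSup_add,
    WithBot.coe_le_coe]
  refine iSup_le fun p => le_iSup_of_le p.1 ?_
  rw [add_comm]
  exact add_le_add ((Ideal.height_mono p.2).trans_eq (PrimeSpectrum.height_eq_orderHeight p.1))
    (Order.coheight_le_coheight_apply_of_strictMono _ (Subtype.strictMono_coe _) p)

theorem ringKrullDim_le_of_isIntegral {R S : Type*} [CommRing R] [CommRing S] [Algebra R S]
    [Algebra.IsIntegral R S] : ringKrullDim S ≤ ringKrullDim R :=
  Order.krullDim_le_of_strictMono (PrimeSpectrum.comap (algebraMap R S)) fun _ _ h =>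
    Ideal.IsIntegral.comap_lt_comap h

theorem ringKrullDim_quotient_le_of_le_radical {R : Type*} [CommRing R] {I J : Ideal R}
    (h : I ≤ J.radical) : ringKrullDim (R ⧸ J) ≤ ringKrullDim (R ⧸ I) := by
  rw [ringKrullDim_quotient, ringKrullDim_quotient]
  exact Order.krullDim_le_of_strictMono
    (fun p => ⟨p.1, h.trans (p.1.2.radical_le_iff.mpr p.2)⟩) fun _ _ hpq => hpq

theorem ringKrullDim_quotient_le_quotient_sup_add_spanFinrank {R : Type*} [CommRing R]
    [IsNoetherianRing R] (I : Ideal R) {J : Ideal R} (hJ : J ≤ Ring.jacobson R) :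
    ringKrullDim (R ⧸ I) ≤ ringKrullDim (R ⧸ (I ⊔ J)) + J.spanFinrank := by
  calc ringKrullDim (R ⧸ I)
      ≤ ringKrullDim ((R ⧸ I) ⧸ J.map (Ideal.Quotient.mk I)) +
          (J.map (Ideal.Quotient.mk I)).spanFinrank :=
        ringKrullDim_le_ringKrullDim_quotient_add_spanFinrank _
          (Ideal.map_le_iff_le_comap.mpr (hJ.trans (Ring.le_comap_jacobson _)))
    _ ≤ ringKrullDim (R ⧸ (I ⊔ J)) + J.spanFinrank := by
        rw [ringKrullDim_eq_of_ringEquiv (DoubleQuot.quotQuotEquivQuotSup I J)]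
        gcongr
        exact Ideal.spanFinrank_map_le_of_fg _ (IsNoetherian.noetherian J)

end KrullDimension

section MinimalGenerators

/-- The ideal `a` of a local ring has analytic spread at most `d`: the partial sums of
`k ↦ μ(a^k)` grow at most like `n ^ d`. Bounding the partial sums instead of `μ(a^n)` itself by
`n ^ (d - 1)` keeps the notion meaningful for `d = 0`. -/
def AnalyticSpreadLE {R : Type*} [CommRing R] (a : Ideal R) (d : ℕ) : Prop :=
  ∃ C : ℕ, ∀ n, ∑ k ∈ Finset.range n, (a ^ k).spanFinrank ≤ C * (n + 1) ^ d

theorem minGen_eq_spanFinrank {R M : Type*} [Ring R] [AddCommGroup M] [Module R M]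
    {N : Submodule R M} (hN : N.FG) : minGen R N = N.spanFinrank := by
  rw [← Submodule.spanFinrank_top]
  obtain ⟨s, hcard, hspan⟩ :=
    Submodule.FG.exists_span_finset_card_eq_spanFinrank ((Submodule.fg_top N).mpr hN)
  refine le_antisymm (Nat.sInf_le ⟨s, hcard, hspan⟩) (le_csInf ⟨_, s, hcard, hspan⟩ ?_)
  rintro _ ⟨t, rfl, ht⟩
  rw [← ht, ← Set.ncard_coe_finset]
  exact Submodule.spanFinrank_span_le_ncard_of_finite t.finite_toSet

theorem length_quotient_maximalIdeal_smul_top {R M : Type*} [CommRing R] [IsLocalRing R]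
    [AddCommGroup M] [Module R M] {N : Submodule R M} (hN : N.FG) :
    Module.length R (N ⧸ (maximalIdeal R • ⊤ : Submodule R N)) = N.spanFinrank := by
  let _ : Field (R ⧸ maximalIdeal R) := Ideal.Quotient.field _
  have : Module.Finite R N := Module.Finite.iff_fg.mpr hN
  have : Module.Finite (R ⧸ maximalIdeal R) (N ⧸ (maximalIdeal R • ⊤ : Submodule R N)) :=
    Module.Finite.of_restrictScalars_finite R _ _
  rw [IsLocalRing.spanFinrank_eq_finrank_quotient N hN, ← Module.length_eq_finrank]
  exact Module.length_eq_of_surjective Ideal.Quotient.mk_surjective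

theorem length_quotient_eq_add_length_quotient_sup {R M : Type*} [Ring R] [AddCommGroup M]
    [Module R M] (K N : Submodule R M) :
    Module.length R (M ⧸ K) =
      Module.length R (N ⧸ K.comap N.subtype) + Module.length R (M ⧸ (K ⊔ N)) := by
  refine Module.length_eq_add_of_exact ((K.comap N.subtype).mapQ K N.subtype le_rfl)
    (Submodule.factor le_sup_left) ?_ (Submodule.factor_surjective _) ?_
  · rw [← LinearMap.ker_eq_bot, Submodule.ker_mapQ]
    simp
  · rw [LinearMap.exact_iff, Submodule.range_mapQ, Submodule.factor, Submodule.ker_mapQ]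
    simp [Submodule.map_sup]

theorem comap_subtype_sup_smul {R M : Type*} [CommRing R] [AddCommGroup M] [Module R M]
    {I : Ideal R} {K N : Submodule R M} (h : K ⊓ N ≤ I • N) :
    (K ⊔ I • N).comap N.subtype = I • ⊤ := by
  refine Submodule.map_injective_of_injective N.injective_subtype ?_
  rw [Submodule.map_comap_subtype, Submodule.map_smul'', Submodule.map_subtype_top, inf_comm,
    sup_comm, sup_inf_assoc_of_le K Submodule.smul_le_right]
  exact sup_eq_left.mpr h

theorem spanFinrank_add_length_quotient_sup {R M : Type*} [CommRing R] [IsLocalRing R]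
    [AddCommGroup M] [Module R M] {K N : Submodule R M} (hN : N.FG)
    (h : K ⊓ N ≤ maximalIdeal R • N) :
    N.spanFinrank + Module.length R (M ⧸ (K ⊔ N)) =
      Module.length R (M ⧸ (K ⊔ maximalIdeal R • N)) := by
  rw [length_quotient_eq_add_length_quotient_sup (K ⊔ maximalIdeal R • N) N,
    comap_subtype_sup_smul h, length_quotient_maximalIdeal_smul_top hN, sup_assoc,
    sup_eq_right.mpr (Submodule.smul_le_right (N := N) (I := maximalIdeal R))]

theorem length_le_of_ker_le_ker {R M N P : Type*} [Ring R] [AddCommGroup M] [AddCommGroup N]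
    [AddCommGroup P] [Module R M] [Module R N] [Module R P] {f : M →ₗ[R] N}
    (hf : Function.Surjective f) {g : M →ₗ[R] P} (h : LinearMap.ker g ≤ LinearMap.ker f) :
    Module.length R N ≤ Module.length R P :=
  calc Module.length R N ≤ Module.length R (M ⧸ LinearMap.ker g) :=
        Module.length_le_of_surjective ((LinearMap.ker g).liftQ f h) fun y =>
          (hf y).imp' (Submodule.Quotient.mk) fun _ hm => hm
    _ ≤ Module.length R P :=
        Module.length_le_of_injective ((LinearMap.ker g).liftQ g le_rfl)
          (LinearMap.ker_eq_bot.mp (Submodule.ker_liftQ_eq_bot _ _ _ le_rfl))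

end MinimalGenerators

section HilbertSamuel

variable {R : Type*} [CommRing R]

theorem length_quotient_sup_span_mul_le (I : Ideal R) (x y : R) :
    Module.length R (R ⧸ (I ⊔ Ideal.span {x * y})) ≤
      Module.length R (R ⧸ (I ⊔ Ideal.span {x})) + Module.length R (R ⧸ (I ⊔ Ideal.span {y})) := by
  set K := I ⊔ Ideal.span {x * y}
  have hsup : K ⊔ Ideal.span {x} = I ⊔ Ideal.span {x} := by
    rw [sup_assoc, sup_eq_right.mpr
      (Ideal.span_singleton_le_span_singleton.mpr (dvd_mul_right x y))]
  let f : R →ₗ[R] Ideal.span {x} :=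
    LinearMap.toSpanSingleton R _ ⟨x, Ideal.mem_span_singleton_self x⟩
  have hf : Function.Surjective f := by
    rintro ⟨z, hz⟩
    obtain ⟨c, rfl⟩ := Ideal.mem_span_singleton'.mp hz
    exact ⟨c, rfl⟩
  have hle : I ⊔ Ideal.span {y} ≤ (Submodule.comap (Ideal.span {x}).subtype K).comap f := by
    refine sup_le (fun r hr => Ideal.mem_sup_left (I.mul_mem_right x hr))
      ((Ideal.span_singleton_le_iff_mem _).mpr (Ideal.mem_sup_right ?_))
    exact Ideal.mem_span_singleton'.mpr ⟨1, by simp [f, mul_comm]⟩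
  rw [length_quotient_eq_add_length_quotient_sup K (Ideal.span {x}), hsup, add_comm]
  gcongr
  refine Module.length_le_of_surjective (Submodule.mapQ _ _ f hle) fun z => ?_
  obtain ⟨w, rfl⟩ := Submodule.mkQ_surjective _ z
  obtain ⟨r, rfl⟩ := hf w
  exact ⟨Submodule.Quotient.mk r, rfl⟩

theorem length_quotient_sup_span_pow_le (I : Ideal R) (x : R) (n : ℕ) :
    Module.length R (R ⧸ (I ⊔ Ideal.span {x ^ n})) ≤
      n * Module.length R (R ⧸ (I ⊔ Ideal.span {x})) := by
  induction n with
  | zero =>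
    have : Subsingleton (R ⧸ (I ⊔ Ideal.span {x ^ 0})) :=
      Ideal.Quotient.subsingleton_iff.mpr (by simp)
    simp
  | succ n ih =>
    rw [pow_succ, Nat.cast_succ, add_mul, one_mul]
    exact (length_quotient_sup_span_mul_le I _ x).trans (by gcongr)

theorem length_quotient_sup_span_image_pow_le (I : Ideal R) (s : Finset R) (n : ℕ) :
    Module.length R (R ⧸ (I ⊔ Ideal.span ((· ^ n) '' (s : Set R)))) ≤
      (n : ℕ∞) ^ s.card * Module.length R (R ⧸ (I ⊔ Ideal.span (s : Set R))) := by
  classical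
  induction s using Finset.induction_on generalizing I with
  | empty => rw [Finset.coe_empty, Set.image_empty, Finset.card_empty, pow_zero, one_mul]
  | insert x s hx ih =>
    rw [Finset.coe_insert, Set.image_insert_eq, Ideal.span_insert, Ideal.span_insert,
      ← sup_assoc, ← sup_assoc, Finset.card_insert_of_notMem hx, pow_succ, mul_assoc]
    refine (ih _).trans (mul_le_mul_right ?_ _)
    rw [sup_right_comm, sup_right_comm I (Ideal.span {x})]
    exact length_quotient_sup_span_pow_le _ _ _

variable [IsLocalRing R]

theorem exists_length_quotient_pow_le [IsNoetherianRing R] {q : Ideal R}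
    (hq : q.radical = maximalIdeal R) {d : ℕ} (hd : ringKrullDim R ≤ d) :
    ∃ C : ℕ, ∀ n : ℕ, Module.length R (R ⧸ q ^ n) ≤ C * ((n : ℕ∞) + 1) ^ d := by
  obtain ⟨t, htmin, htcard⟩ :=
    Ideal.exists_finset_card_eq_height_of_isNoetherianRing (maximalIdeal R)
  have htd : t.card ≤ d := by
    rw [← maximalIdeal_height_eq_ringKrullDim, ← htcard] at hd
    exact_mod_cast hd
  obtain ⟨N, hN⟩ := q.exists_radical_pow_le_of_fg (IsNoetherian.noetherian _)
  have := IsLocalRing.quotient_artinian_of_mem_minimalPrimes_of_isLocalRing _ htmin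
  obtain ⟨c, hc⟩ : ∃ c : ℕ, (c : ℕ∞) = Module.length R (R ⧸ Ideal.span (t : Set R)) := by
    rw [Module.length_eq_of_surjective (R := R ⧸ Ideal.span (t : Set R))
      Ideal.Quotient.mk_surjective]
    exact ENat.ne_top_iff_exists.mp Module.length_ne_top
  have hpow (n : ℕ) : Ideal.span ((· ^ (N * n)) '' (t : Set R)) ≤ q ^ n := by
    rw [Ideal.span_le]
    rintro _ ⟨x, hx, rfl⟩
    refine Ideal.pow_right_mono (hq ▸ hN) n ?_
    rw [← pow_mul]
    exact Ideal.pow_mem_pow (htmin.1.2 (Ideal.subset_span hx)) _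
  refine ⟨N ^ t.card * c, fun n => ?_⟩
  calc Module.length R (R ⧸ q ^ n)
      ≤ Module.length R (R ⧸ Ideal.span ((· ^ (N * n)) '' (t : Set R))) :=
        Module.length_le_of_surjective _ (Submodule.factor_surjective (hpow n))
    _ ≤ (N * n : ℕ) ^ t.card * c := by
        have hle := length_quotient_sup_span_image_pow_le ⊥ t (N * n)
        rwa [bot_sup_eq, bot_sup_eq, ← hc] at hle
    _ = N ^ t.card * c * (n : ℕ∞) ^ t.card := by push_cast; ring
    _ ≤ N ^ t.card * c * ((n : ℕ∞) + 1) ^ d := by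
        gcongr _ * ?_
        exact (pow_le_pow_left' le_self_add _).trans (pow_le_pow_right₀ le_add_self htd)
    _ = _ := by push_cast; rfl

theorem radical_map_quotientMk_eq_maximalIdeal {I J : Ideal R}
    (h : (I ⊔ J).radical = maximalIdeal R) [IsLocalRing (R ⧸ J)] :
    (I.map (Ideal.Quotient.mk J)).radical = maximalIdeal (R ⧸ J) := by
  have hmap : (I ⊔ J).map (Ideal.Quotient.mk J) = I.map (Ideal.Quotient.mk J) := by
    rw [Ideal.map_sup, Ideal.map_quotient_self, sup_bot_eq]
  rw [← hmap, ← Ideal.map_radical_of_surjective Ideal.Quotient.mk_surjective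
    (Ideal.mk_ker.trans_le le_sup_right), h, map_quotientMk_maximalIdeal]

theorem exists_length_quotient_sup_pow_le [IsNoetherianRing R] {a b : Ideal R}
    (hrad : (a ⊔ b).radical = maximalIdeal R) {d : ℕ} (hd : ringKrullDim (R ⧸ b) ≤ d) :
    ∃ C : ℕ, ∀ n : ℕ, Module.length R (R ⧸ (b ⊔ a ^ n)) ≤ C * ((n : ℕ∞) + 1) ^ d := by
  have hb : b ≠ ⊤ := ne_top_of_le_ne_top (maximalIdeal.isMaximal R).ne_top
    (hrad ▸ le_sup_right.trans Ideal.le_radical)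
  have := isLocalRing_quotient hb
  obtain ⟨C, hC⟩ := exists_length_quotient_pow_le (radical_map_quotientMk_eq_maximalIdeal hrad) hd
  refine ⟨C, fun n => ?_⟩
  have hlen := hC n
  rw [← Ideal.map_pow] at hlen
  rwa [← (DoubleQuot.quotQuotEquivQuotSupₐ R b (a ^ n)).toLinearEquiv.length_eq,
    Module.length_eq_of_surjective (R := R ⧸ b) Ideal.Quotient.mk_surjective]

theorem sum_range_le_add_of_forall_add_le {M : Type*} [AddCommMonoid M] [PartialOrder M]
    [CanonicallyOrderedAdd M] [IsOrderedAddMonoid M] {u v : ℕ → M} {n₀ : ℕ}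
    (h : ∀ n ≥ n₀, u n + v n ≤ v (n + 1)) (n : ℕ) :
    ∑ k ∈ Finset.range n, u k ≤ ∑ k ∈ Finset.range n₀, u k + v n := by
  rcases le_total n n₀ with hn | hn
  · exact (Finset.sum_le_sum_of_subset (Finset.range_mono hn)).trans le_self_add
  induction n, hn using Nat.le_induction with
  | base => exact le_self_add
  | succ n hn ih =>
    calc ∑ k ∈ Finset.range (n + 1), u k
        ≤ ∑ k ∈ Finset.range n₀, u k + v n + u n := by
          rw [Finset.sum_range_succ]
          gcongr
      _ = ∑ k ∈ Finset.range n₀, u k + (u n + v n) := by rw [add_assoc, add_comm (v n)]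
      _ ≤ ∑ k ∈ Finset.range n₀, u k + v (n + 1) := by
          gcongr
          exact h n hn

theorem analyticSpreadLE_of_inf_pow_le [IsNoetherianRing R] {a b : Ideal R}
    (hrad : (a ⊔ b).radical = maximalIdeal R)
    (hb : ∀ᶠ n : ℕ in atTop, b ⊓ a ^ n ≤ maximalIdeal R * a ^ n) {d : ℕ}
    (hd : ringKrullDim (R ⧸ b) ≤ d) : AnalyticSpreadLE a d := by
  obtain ⟨n₀, hn₀⟩ := eventually_atTop.mp hb
  have ha : a ≤ maximalIdeal R := hrad ▸ le_sup_left.trans Ideal.le_radical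
  have hstep (n : ℕ) (hn : n ≥ n₀) : (a ^ n).spanFinrank + Module.length R (R ⧸ (b ⊔ a ^ n)) ≤
      Module.length R (R ⧸ (b ⊔ a ^ (n + 1))) := by
    have hle : a ^ (n + 1) ≤ maximalIdeal R • a ^ n := by
      rw [pow_succ']
      exact Ideal.mul_mono_left ha
    rw [spanFinrank_add_length_quotient_sup (IsNoetherian.noetherian _) (hn₀ n hn)]
    exact Module.length_le_of_surjective _
      (Submodule.factor_surjective (sup_le_sup_left hle b))
  obtain ⟨C, hC⟩ := exists_length_quotient_sup_pow_le hrad hd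
  refine ⟨∑ k ∈ Finset.range n₀, (a ^ k).spanFinrank + C, fun n => ?_⟩
  rw [← Nat.cast_le (α := ℕ∞)]
  push_cast
  calc ∑ k ∈ Finset.range n, ((a ^ k).spanFinrank : ℕ∞)
      ≤ ∑ k ∈ Finset.range n₀, ((a ^ k).spanFinrank : ℕ∞) + C * ((n : ℕ∞) + 1) ^ d :=
        (sum_range_le_add_of_forall_add_le hstep n).trans (by gcongr; exact hC n)
    _ ≤ _ := by
        rw [add_mul]
        gcongr
        exact le_mul_of_one_le_right' (one_le_pow₀ le_add_self)

end HilbertSamuel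

section FiltrationGrowth

theorem le_of_forall_pow_le_mul_pow {e d C D : ℕ}
    (h : ∀ n : ℕ, (n + 1) ^ e ≤ C * (D * n + 1) ^ d) : e ≤ d := by
  by_contra! hlt
  set K := C * (D + 1) ^ d
  have hK : (K + 1) * (K + 1) ^ d ≤ K * (K + 1) ^ d :=
    calc (K + 1) * (K + 1) ^ d = (K + 1) ^ (d + 1) := (pow_succ' _ _).symm
      _ ≤ (K + 1) ^ e := Nat.pow_le_pow_right K.succ_pos hlt
      _ ≤ C * (D * K + 1) ^ d := h K
      _ ≤ C * ((D + 1) * (K + 1)) ^ d := by gcongr; nlinarith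
      _ = K * (K + 1) ^ d := by rw [mul_pow, ← mul_assoc]
  exact (Nat.le_of_mul_le_mul_right hK (by positivity)).not_gt K.lt_succ_self

variable {k B : Type*} [Field k] [CommRing B] [Algebra k B]

theorem linearIndependent_prod_pow {ι : Type*} [Fintype ι] {x : ι → B}
    (hx : AlgebraicIndependent k x) :
    LinearIndependent k fun c : ι → ℕ => ∏ i, x i ^ c i := by
  have hmono := ((MvPolynomial.basisMonomials ι k).linearIndependent.map'
    (MvPolynomial.aeval x).toLinearMap (LinearMap.ker_eq_bot.mpr hx)).comp
    _ Finsupp.equivFunOnFinite.symm.injective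
  simpa [Function.comp_def, MvPolynomial.aeval_monomial, Finsupp.prod_fintype] using hmono

theorem card_le_length_of_linearIndependent {ι M : Type*} [Fintype ι] [AddCommGroup M] [Module k M]
    {v : ι → M} (hv : LinearIndependent k v) {V : Submodule k M} (hV : ∀ i, v i ∈ V) :
    (Fintype.card ι : ℕ∞) ≤ Module.length k V := by
  have hv' : LinearIndependent k fun i => (⟨v i, hV i⟩ : V) :=
    LinearIndependent.of_comp V.subtype hv
  have hle := Module.length_le_of_injective _
    (linearIndependent_iff_injective_fintypeLinearCombination.mp hv')
  rwa [Module.length_eq_finrank, Module.finrank_fintype_fun_eq_card] at hle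

theorem pow_card_le_length_filtration {V : ℕ → Submodule k B} [SetLike.GradedMonoid V]
    (hmono : Monotone V) {ι : Type*} [Fintype ι] {x : ι → B} (hx : AlgebraicIndependent k x)
    {D : ℕ} (hD : ∀ i, x i ∈ V D) (n : ℕ) :
    (((n + 1) ^ Fintype.card ι : ℕ) : ℕ∞) ≤ Module.length k (V (Fintype.card ι * D * n)) := by
  classical
  have hv := (linearIndependent_prod_pow hx).comp
    (fun (c : ι → Fin (n + 1)) i => (c i : ℕ)) fun c c' h => funext fun i => Fin.ext (congrFun h i)
  have hmem (c : ι → Fin (n + 1)) :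
      ∏ i, x i ^ (c i : ℕ) ∈ V (Fintype.card ι * D * n) := by
    refine hmono ?_ (SetLike.prod_pow_mem_graded V _ _ (fun i => (c i : ℕ)) fun i _ => hD i)
    calc ∑ i, (c i : ℕ) • D ≤ ∑ _i : ι, n * D :=
          Finset.sum_le_sum fun i _ => Nat.mul_le_mul_right D (Nat.lt_succ_iff.mp (c i).2)
      _ = Fintype.card ι * D * n := by simp [mul_assoc, mul_comm n]
  simpa using card_le_length_of_linearIndependent hv hmem

theorem ringKrullDim_le_of_filtration_growth [Nontrivial B] [Algebra.FiniteType k B]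
    {V : ℕ → Submodule k B} [SetLike.GradedMonoid V] (hmono : Monotone V)
    (hexh : ∀ x, ∃ n, x ∈ V n) {C d : ℕ}
    (hC : ∀ n : ℕ, Module.length k (V n) ≤ C * ((n : ℕ∞) + 1) ^ d) : ringKrullDim B ≤ d := by
  obtain ⟨e, g, hg, hint⟩ := exists_integral_inj_algHom_of_fg k B
  have hind : AlgebraicIndependent k fun i => g (MvPolynomial.X i) :=
    (MvPolynomial.algebraicIndependent_X (Fin e) k).map' hg
  choose N hN using hexh
  have hD (i : Fin e) : g (MvPolynomial.X i) ∈ V (∑ j, N (g (MvPolynomial.X j))) :=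
    hmono (Finset.single_le_sum (f := fun j => N (g (MvPolynomial.X j)))
      (fun _ _ => Nat.zero_le _) (Finset.mem_univ i)) (hN _)
  have hed : e ≤ d := le_of_forall_pow_le_mul_pow fun n => by
    have hle := (pow_card_le_length_filtration hmono hind hD n).trans (hC _)
    rw [Fintype.card_fin] at hle
    exact_mod_cast hle
  algebraize [g.toRingHom]
  calc ringKrullDim B ≤ ringKrullDim (MvPolynomial (Fin e) k) := ringKrullDim_le_of_isIntegral
    _ = e := by
        rw [MvPolynomial.ringKrullDim_of_isNoetherianRing, ringKrullDim_eq_zero_of_field]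
        simp
    _ ≤ d := by exact_mod_cast hed

theorem ringKrullDim_le_of_filtration_growth_of_surjective {R : Type*} [CommRing R] [Algebra R k]
    [Algebra R B] [IsScalarTower R k B] (hk : Function.Surjective (algebraMap R k)) [Nontrivial B]
    [Algebra.FiniteType R B] {U : ℕ → Submodule R B} [SetLike.GradedMonoid U] (hmono : Monotone U)
    (hexh : ∀ x, ∃ n, x ∈ U n) {C d : ℕ}
    (hC : ∀ n : ℕ, Module.length R (U n) ≤ C * ((n : ℕ∞) + 1) ^ d) : ringKrullDim B ≤ d := by
  have : Algebra.FiniteType k B := Algebra.FiniteType.of_restrictScalars_finiteType R k B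
  set V : ℕ → Submodule k B := fun n => Submodule.span k (U n : Set B)
  have hcoe (n : ℕ) : (V n : Set B) = U n := by
    rw [Submodule.coe_span_eq_span_of_surjective R k hk, Submodule.span_eq]
  have hmem (n : ℕ) (y : B) : y ∈ V n ↔ y ∈ U n := Set.ext_iff.mp (hcoe n) y
  have hlen (n : ℕ) : Module.length k (V n) = Module.length R (U n) := by
    rw [← Module.length_eq_of_surjective (S := R) hk]
    exact (LinearEquiv.ofEq ((V n).restrictScalars R) (U n)
      (SetLike.coe_injective (hcoe n))).length_eq
  have : SetLike.GradedMonoid V :=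
    { one_mem := (hmem 0 1).mpr SetLike.GradedOne.one_mem
      mul_mem := fun i j x y hx hy => (hmem _ _).mpr
        (SetLike.GradedMul.mul_mem ((hmem i x).mp hx) ((hmem j y).mp hy)) }
  refine ringKrullDim_le_of_filtration_growth (V := V) (C := C)
    (fun i j hij => Submodule.span_mono (hmono hij)) (fun x => ?_) (fun n => ?_)
  · obtain ⟨n, hn⟩ := hexh x
    exact ⟨n, (hmem n x).mpr hn⟩
  · rw [hlen]
    exact hC n

end FiltrationGrowth

section HomogeneousParameters

variable {A σ : Type*} [CommRing A] [SetLike σ A] [AddSubmonoidClass σ A] (𝒜 : ℕ → σ)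
  [GradedRing 𝒜]

theorem exists_mem_notMem_of_not_irrelevant_le {P : Ideal A}
    (hP : ¬ (HomogeneousIdeal.irrelevant 𝒜).toIdeal ≤ P) : ∃ n > 0, ∃ x ∈ 𝒜 n, x ∉ P := by
  by_contra! h
  exact hP ((HomogeneousIdeal.toIdeal_irrelevant_le 𝒜).mpr h)

-- For a fixed `P₀ ∈ T`, the element is `(∏ P ≠ P₀, x P) ^ n P₀ + x P₀ ^ ∑ P ≠ P₀, n P`: each
-- member of `T` contains exactly one of the two summands.
theorem exists_mem_forall_notMem_of_mem_of_notMem_erase [DecidableEq (Ideal A)]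
    {T : Finset (Ideal A)} (hT : T.Nontrivial) (hprime : ∀ P ∈ T, P.IsPrime) {n : Ideal A → ℕ}
    {x : Ideal A → A} (hn : ∀ P ∈ T, 0 < n P) (hx : ∀ P ∈ T, x P ∈ 𝒜 (n P))
    (hmem : ∀ P ∈ T, x P ∈ P) (hnot : ∀ P ∈ T, ∀ P' ∈ T.erase P, x P ∉ P') :
    ∃ m > 0, ∃ z ∈ 𝒜 m, ∀ P ∈ T, z ∉ P := by
  obtain ⟨P₀, hP₀⟩ := hT.nonempty
  have hne : (T.erase P₀).Nonempty := hT.erase_nonempty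
  set u := ∏ P ∈ T.erase P₀, x P
  set m := ∑ P ∈ T.erase P₀, n P
  have hu : u ∈ 𝒜 m :=
    SetLike.prod_mem_graded 𝒜 _ _ fun P hP => hx P (Finset.mem_of_mem_erase hP)
  have hm : 0 < m := Finset.sum_pos (fun P hP => hn P (Finset.mem_of_mem_erase hP)) hne
  have hu_mem : ∀ P ∈ T.erase P₀, u ∈ P := fun P hP =>
    Ideal.mem_of_dvd _ (Finset.dvd_prod_of_mem x hP) (hmem P (Finset.mem_of_mem_erase hP))
  have hu_not : u ∉ P₀ := by
    have := hprime P₀ hP₀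
    rw [Ideal.IsPrime.prod_mem_iff]
    rintro ⟨P, hP, hxP⟩
    exact hnot P (Finset.mem_of_mem_erase hP) P₀
      (Finset.mem_erase.mpr ⟨(Finset.ne_of_mem_erase hP).symm, hP₀⟩) hxP
  refine ⟨n P₀ * m, Nat.mul_pos (hn _ hP₀) hm, u ^ n P₀ + x P₀ ^ m, add_mem ?_ ?_, ?_⟩
  · exact SetLike.pow_mem_graded (n P₀) hu
  · simpa only [mul_comm, smul_eq_mul] using SetLike.pow_mem_graded m (hx P₀ hP₀)
  · intro P hP hz
    have hPprime := hprime P hP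
    by_cases h : P = P₀
    · subst h
      have hxm : x P ^ m ∈ P := Ideal.pow_mem_of_mem _ (hmem P hP) _ hm
      exact hu_not (hPprime.mem_of_pow_mem _ ((Ideal.add_mem_iff_left _ hxm).mp hz))
    · have hP' : P ∈ T.erase P₀ := Finset.mem_erase.mpr ⟨h, hP⟩
      have hun : u ^ n P₀ ∈ P := Ideal.pow_mem_of_mem _ (hu_mem P hP') _ (hn _ hP₀)
      exact hnot P₀ hP₀ P hP' (hPprime.mem_of_pow_mem _ ((Ideal.add_mem_iff_right _ hun).mp hz))

theorem exists_mem_forall_notMem_of_not_irrelevant_le (T : Finset (Ideal A))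
    (hprime : ∀ P ∈ T, P.IsPrime)
    (hT : ∀ P ∈ T, ¬ (HomogeneousIdeal.irrelevant 𝒜).toIdeal ≤ P) :
    ∃ n > 0, ∃ z ∈ 𝒜 n, ∀ P ∈ T, z ∉ P := by
  classical
  induction T using Finset.strongInduction with
  | H T ih =>
    rcases T.eq_empty_or_nonempty with rfl | ⟨P₀, hP₀⟩
    · exact ⟨1, one_pos, 0, zero_mem _, by simp⟩
    rcases Finset.eq_singleton_or_nontrivial hP₀ with rfl | hnontrivial
    · simpa only [Finset.mem_singleton, forall_eq] using
        exists_mem_notMem_of_not_irrelevant_le 𝒜 (hT P₀ hP₀)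
    have herase : ∀ P ∈ T, ∃ n > 0, ∃ z ∈ 𝒜 n, ∀ P' ∈ T.erase P, z ∉ P' := fun P hP =>
      ih _ (Finset.erase_ssubset hP) (fun P' h => hprime P' (Finset.mem_of_mem_erase h))
        (fun P' h => hT P' (Finset.mem_of_mem_erase h))
    choose! n hn x hx hnot using herase
    by_cases hmem : ∀ P ∈ T, x P ∈ P
    · exact exists_mem_forall_notMem_of_mem_of_notMem_erase 𝒜 hnontrivial hprime hn hx hmem hnot
    · push Not at hmem
      obtain ⟨P, hP, hxP⟩ := hmem
      refine ⟨n P, hn P hP, x P, hx P hP, fun P' hP' => ?_⟩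
      by_cases h : P' = P
      · rwa [h]
      · exact hnot P hP P' (Finset.mem_erase.mpr ⟨h, hP'⟩)

theorem sup_irrelevant_ne_top {I : Ideal A} (hI : I.IsHomogeneous 𝒜) (hne : I ≠ ⊤) :
    I ⊔ (HomogeneousIdeal.irrelevant 𝒜).toIdeal ≠ ⊤ := by
  rw [Ideal.ne_top_iff_one] at hne ⊢
  intro h
  obtain ⟨y, hy, r, hr, hyr⟩ := Submodule.mem_sup.mp h
  have hr₀ : GradedRing.proj 𝒜 0 r = 0 := (HomogeneousIdeal.mem_irrelevant_iff 𝒜 r).mp hr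
  have hone : GradedRing.proj 𝒜 0 (1 : A) = 1 :=
    DirectSum.decompose_of_mem_same 𝒜 SetLike.GradedOne.one_mem
  rw [← hone, ← hyr, map_add, hr₀, add_zero] at hne
  exact hne (hI 0 hy)

theorem irrelevant_le_radical_of_forall_ringKrullDim_le_zero {Q : Ideal A}
    (hQ : Q.IsHomogeneous 𝒜)
    (hd : ∀ P : Ideal A, P.IsPrime → Q ≤ P →
      ¬ (HomogeneousIdeal.irrelevant 𝒜).toIdeal ≤ P → ringKrullDim (A ⧸ P) ≤ 0) :
    (HomogeneousIdeal.irrelevant 𝒜).toIdeal ≤ Q.radical := by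
  rw [Ideal.radical_eq_sInf]
  refine le_sInf ?_
  rintro P ⟨hQP, hP⟩
  by_contra hirr
  set P' := (P.homogeneousCore 𝒜).toIdeal
  have hP' : P'.IsPrime := hP.homogeneousCore
  have hP'P : P' ≤ P := P.toIdeal_homogeneousCore_le 𝒜
  have hQP' : Q ≤ P' := by
    rw [← hQ.toIdeal_homogeneousCore_eq_self]
    exact Ideal.homogeneousCore_mono 𝒜 hQP
  have : Ring.KrullDimLE 0 (A ⧸ P') :=
    Ring.krullDimLE_iff.mpr (hd P' hP' hQP' fun h => hirr (h.trans hP'P))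
  have hmax : P'.IsMaximal :=
    Ideal.Quotient.maximal_of_isField _ Ring.KrullDimLE.isField_of_isDomain
  have hsup := sup_irrelevant_ne_top 𝒜 (P.homogeneousCore 𝒜).isHomogeneous hP'.ne_top
  exact hirr (le_sup_right.trans ((hmax.eq_of_le hsup le_sup_left).ge.trans hP'P))

theorem ringKrullDim_quotient_add_one_le {P P' : Ideal A} [P.IsPrime] (h : P ≤ P') {z : A}
    (hz : z ∉ P) (hz' : z ∈ P') : ringKrullDim (A ⧸ P') + 1 ≤ ringKrullDim (A ⧸ P) :=
  ringKrullDim_succ_le_of_surjective (Ideal.Quotient.factor h)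
    (Ideal.Quotient.factor_surjective h) (r := Ideal.Quotient.mk P z)
    (mem_nonZeroDivisors_of_ne_zero (by rwa [Ne, Ideal.Quotient.eq_zero_iff_mem]))
    (by rwa [Ideal.Quotient.factor_mk, Ideal.Quotient.eq_zero_iff_mem])

theorem exists_mem_forall_ringKrullDim_quotient_le [IsNoetherianRing A] {d : ℕ} {Q : Ideal A}
    (hd : ∀ P : Ideal A, P.IsPrime → Q ≤ P →
      ¬ (HomogeneousIdeal.irrelevant 𝒜).toIdeal ≤ P → ringKrullDim (A ⧸ P) ≤ (d + 1 : ℕ)) :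
    ∃ n > 0, ∃ z ∈ 𝒜 n, ∀ P : Ideal A, P.IsPrime → Q ⊔ Ideal.span {z} ≤ P →
      ¬ (HomogeneousIdeal.irrelevant 𝒜).toIdeal ≤ P → ringKrullDim (A ⧸ P) ≤ d := by
  classical
  obtain ⟨n, hn, z, hz, hzT⟩ := exists_mem_forall_notMem_of_not_irrelevant_le 𝒜
    (Q.finite_minimalPrimes_of_isNoetherianRing.toFinset.filter
      fun P => ¬ (HomogeneousIdeal.irrelevant 𝒜).toIdeal ≤ P)
    (fun P hP => (Set.Finite.mem_toFinset _ |>.mp (Finset.mem_filter.mp hP).1).1.1)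
    (fun P hP => (Finset.mem_filter.mp hP).2)
  refine ⟨n, hn, z, hz, fun P hP hle hirr => ?_⟩
  obtain ⟨P₀, hP₀, hP₀P⟩ := Ideal.exists_minimalPrimes_le (le_sup_left.trans hle)
  have := hP₀.1.1
  have hirr₀ : ¬ (HomogeneousIdeal.irrelevant 𝒜).toIdeal ≤ P₀ := fun h => hirr (h.trans hP₀P)
  have hzP₀ : z ∉ P₀ :=
    hzT P₀ (Finset.mem_filter.mpr ⟨(Set.Finite.mem_toFinset _).mpr hP₀, hirr₀⟩)
  have hdrop := ringKrullDim_quotient_add_one_le hP₀P hzP₀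
    (hle (Ideal.mem_sup_right (Ideal.mem_span_singleton_self z)))
  have hdim := hdrop.trans (hd P₀ this hP₀.1.2 hirr₀)
  rw [Nat.cast_succ] at hdim
  exact ENat.WithBot.add_le_add_one_right_iff.mp hdim

theorem exists_irrelevant_le_radical_sup_span [IsNoetherianRing A] (d : ℕ) {Q : Ideal A}
    (hQ : Q.IsHomogeneous 𝒜)
    (hd : ∀ P : Ideal A, P.IsPrime → Q ≤ P →
      ¬ (HomogeneousIdeal.irrelevant 𝒜).toIdeal ≤ P → ringKrullDim (A ⧸ P) ≤ d) :
    ∃ s : Finset A, s.card ≤ d ∧ (∀ z ∈ s, ∃ n > 0, z ∈ 𝒜 n) ∧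
      (HomogeneousIdeal.irrelevant 𝒜).toIdeal ≤ (Q ⊔ Ideal.span (s : Set A)).radical := by
  classical
  induction d generalizing Q with
  | zero =>
    refine ⟨∅, le_rfl, by simp, ?_⟩
    rw [Finset.coe_empty, Ideal.span_empty, sup_bot_eq]
    exact irrelevant_le_radical_of_forall_ringKrullDim_le_zero 𝒜 hQ hd
  | succ d ih =>
    obtain ⟨n, hn, z, hz, hzd⟩ := exists_mem_forall_ringKrullDim_quotient_le 𝒜 hd
    have hspan : (Ideal.span {z}).IsHomogeneous 𝒜 :=
      Ideal.homogeneous_span 𝒜 _ (by rintro _ rfl; exact ⟨n, hz⟩)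
    obtain ⟨s, hs, hsh, hsr⟩ := ih (hQ.sup hspan) hzd
    refine ⟨insert z s, (Finset.card_insert_le _ _).trans (by omega), ?_, ?_⟩
    · exact (Finset.forall_mem_insert _ _ _).mpr ⟨⟨n, hn, hz⟩, hsh⟩
    · rwa [Finset.coe_insert, Ideal.span_insert, ← sup_assoc]

end HomogeneousParameters

section FiberCone

open MvPolynomial

section ReesMap

variable {R σ : Type*} [CommRing R]

/-- The presentation `X j ↦ x j * T` of the Rees algebra of the ideal generated by `x`, with the
Rees algebra viewed inside the polynomial ring `R[T]`. -/
noncomputable def reesMap (x : σ → R) : MvPolynomial σ R →ₐ[R] Polynomial R :=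
  aeval fun j => Polynomial.C (x j) * Polynomial.X

theorem reesMap_monomial (x : σ → R) (s : σ →₀ ℕ) (c : R) :
    reesMap x (monomial s c) = Polynomial.monomial s.degree (eval x (monomial s c)) := by
  rw [reesMap, aeval_monomial, eval_monomial, ← Polynomial.C_mul_X_pow_eq_monomial, map_mul,
    mul_assoc, Polynomial.algebraMap_eq]
  congr 1
  simp only [mul_pow, Finsupp.prod, Finset.prod_mul_distrib, map_prod, map_pow,
    Finset.prod_pow_eq_pow_sum, Finsupp.degree_apply]

theorem reesMap_of_isHomogeneous (x : σ → R) {f : MvPolynomial σ R} {n : ℕ}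
    (hf : f.IsHomogeneous n) : reesMap x f = Polynomial.monomial n (eval x f) := by
  conv_lhs => rw [f.as_sum]
  conv_rhs => rw [f.as_sum]
  rw [map_sum, map_sum, map_sum]
  refine Finset.sum_congr rfl fun s hs => ?_
  rw [reesMap_monomial, hf.degree_eq_sum_deg_support hs, Finsupp.degree_apply]

theorem coeff_reesMap (x : σ → R) (f : MvPolynomial σ R) (n : ℕ) :
    (reesMap x f).coeff n = eval x (homogeneousComponent n f) := by
  conv_lhs => rw [← sum_homogeneousComponent f]
  simp_rw [map_sum, Polynomial.finsetSum_coeff,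
    reesMap_of_isHomogeneous x (homogeneousComponent_isHomogeneous _ f), Polynomial.coeff_monomial]
  rw [Finset.sum_ite_eq' (Finset.range (f.totalDegree + 1)) n]
  split_ifs with h
  · rfl
  · rw [homogeneousComponent_eq_zero _ _ (by simpa [Nat.lt_succ_iff] using h), map_zero]

theorem coeff_reesMap_mem (x : σ → R) (f : MvPolynomial σ R) (n : ℕ) :
    (reesMap x f).coeff n ∈ Ideal.span (Set.range x) ^ n := by
  rw [coeff_reesMap, Ideal.mem_span_pow_iff_exists_isHomogeneous]
  exact ⟨_, homogeneousComponent_isHomogeneous n f, rfl⟩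

theorem coeff_reesMap_mem_span_image (x : σ → R) {s : Set (MvPolynomial σ R)}
    (hs : ∀ z ∈ s, ∃ n, z.IsHomogeneous n) {f : MvPolynomial σ R} (hf : f ∈ Ideal.span s) (m : ℕ) :
    (reesMap x f).coeff m ∈ Ideal.span (eval x '' s) := by
  suffices hle : Ideal.span s ≤
      ((Ideal.span (eval x '' s)).map Polynomial.C).comap (reesMap x) from
    Ideal.mem_map_C_iff.mp (hle hf) m
  refine Ideal.span_le.mpr fun z hz => ?_
  obtain ⟨n, hzn⟩ := hs z hz
  rw [SetLike.mem_coe, Ideal.mem_comap, reesMap_of_isHomogeneous x hzn, Ideal.mem_map_C_iff]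
  intro m
  rw [Polynomial.coeff_monomial]
  split_ifs
  · exact Ideal.subset_span (Set.mem_image_of_mem _ hz)
  · exact zero_mem _

end ReesMap

variable {R σ : Type*} [CommRing R] [IsLocalRing R]

/-- The ideal of relations of the fibre cone `⨁ a^n / m a^n` of the ideal `a` generated by `x`:
the quotient of `MvPolynomial σ R` by this ideal is the fibre cone. -/
noncomputable def fiberIdeal (x : σ → R) : Ideal (MvPolynomial σ R) where
  carrier := {f | ∀ n, (reesMap x f).coeff n ∈ maximalIdeal R * Ideal.span (Set.range x) ^ n}
  add_mem' hf hg n := by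
    rw [map_add, Polynomial.coeff_add]
    exact add_mem (hf n) (hg n)
  zero_mem' n := by simp
  smul_mem' g f hf n := by
    rw [smul_eq_mul, map_mul, Polynomial.coeff_mul]
    refine sum_mem fun p hp => ?_
    rw [← Finset.HasAntidiagonal.mem_antidiagonal.mp hp, pow_add, mul_left_comm]
    exact Ideal.mul_mem_mul (coeff_reesMap_mem x g _) (hf _)

theorem mem_fiberIdeal_of_isHomogeneous {x : σ → R} {f : MvPolynomial σ R} {n : ℕ}
    (hf : f.IsHomogeneous n) (h : eval x f ∈ maximalIdeal R * Ideal.span (Set.range x) ^ n) :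
    f ∈ fiberIdeal x := by
  intro m
  rw [reesMap_of_isHomogeneous x hf, Polynomial.coeff_monomial]
  split_ifs with hnm
  · rwa [← hnm]
  · exact zero_mem _

theorem C_mem_fiberIdeal (x : σ → R) {r : R} (hr : r ∈ maximalIdeal R) : C r ∈ fiberIdeal x :=
  mem_fiberIdeal_of_isHomogeneous (isHomogeneous_C σ r) (by simpa using hr)

theorem fiberIdeal_ne_top (x : σ → R) : fiberIdeal x ≠ ⊤ := by
  rw [Ideal.ne_top_iff_one]
  intro h
  simpa using h 0

/-- The exhaustive filtration of the fibre cone by the degree of representing polynomials. -/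
noncomputable def fiberFiltration (x : σ → R) (n : ℕ) :
    Submodule R (MvPolynomial σ R ⧸ fiberIdeal x) :=
  (restrictTotalDegree σ R n).map (Ideal.Quotient.mkₐ R (fiberIdeal x)).toLinearMap

theorem mk_mem_fiberFiltration (x : σ → R) {f : MvPolynomial σ R} {n : ℕ}
    (hf : f.totalDegree ≤ n) : Ideal.Quotient.mk (fiberIdeal x) f ∈ fiberFiltration x n :=
  Submodule.mem_map_of_mem ((mem_restrictTotalDegree σ n f).mpr hf)

theorem fiberFiltration_mono (x : σ → R) : Monotone (fiberFiltration x) := fun _ _ hij =>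
  Submodule.map_mono (restrictSupport_mono R fun _ hn => le_trans hn hij)

instance gradedMonoid_fiberFiltration (x : σ → R) : SetLike.GradedMonoid (fiberFiltration x) where
  one_mem := mk_mem_fiberFiltration x totalDegree_one.le
  mul_mem := by
    rintro i j _ _ ⟨f, hf, rfl⟩ ⟨g, hg, rfl⟩
    exact mk_mem_fiberFiltration x ((totalDegree_mul f g).trans (add_le_add
      ((mem_restrictTotalDegree σ i f).mp hf) ((mem_restrictTotalDegree σ j g).mp hg)))

theorem length_fiberFiltration_le {x : σ → R} (hx : (Ideal.span (Set.range x)).FG) (n : ℕ) :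
    Module.length R (fiberFiltration x n) ≤
      ∑ k ∈ Finset.range (n + 1), ((Ideal.span (Set.range x) ^ k).spanFinrank : ℕ∞) := by
  set a := Ideal.span (Set.range x)
  let coeffMap (k : ℕ) : MvPolynomial σ R →ₗ[R] ↥(a ^ k) :=
    LinearMap.codRestrict (a ^ k) (Polynomial.lcoeff R k ∘ₗ (reesMap x).toLinearMap)
      fun f => coeff_reesMap_mem x f k
  let W := restrictTotalDegree σ R n
  let φ : W →ₗ[R] ∀ k : Fin (n + 1),
      ↥(a ^ (k : ℕ)) ⧸ (maximalIdeal R • ⊤ : Submodule R ↥(a ^ (k : ℕ))) :=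
    LinearMap.pi fun k => Submodule.mkQ _ ∘ₗ coeffMap k ∘ₗ W.subtype
  have hker : LinearMap.ker φ ≤ LinearMap.ker
      ((Ideal.Quotient.mkₐ R (fiberIdeal x)).toLinearMap.submoduleMap W) := by
    rintro ⟨f, hf⟩ hφ
    rw [LinearMap.mem_ker] at hφ ⊢
    refine Subtype.ext (Ideal.Quotient.eq_zero_iff_mem.mpr fun k => ?_)
    by_cases hk : k < n + 1
    · exact (Submodule.mem_smul_top_iff _ _ _).mp
        ((Submodule.Quotient.mk_eq_zero _).mp (congrFun hφ ⟨k, hk⟩))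
    · rw [coeff_reesMap, homogeneousComponent_eq_zero, map_zero]
      · exact zero_mem _
      · exact ((mem_restrictTotalDegree σ n f).mp hf).trans_lt (by omega)
  refine (length_le_of_ker_le_ker (LinearMap.submoduleMap_surjective _ W) hker).trans_eq ?_
  rw [Module.length_pi_of_fintype, Finset.sum_range]
  exact Finset.sum_congr rfl fun k _ => length_quotient_maximalIdeal_smul_top hx.pow

theorem ringKrullDim_quotient_fiberIdeal_le [Finite σ] (x : σ → R) {d : ℕ}
    (h : AnalyticSpreadLE (Ideal.span (Set.range x)) d) :
    ringKrullDim (MvPolynomial σ R ⧸ fiberIdeal x) ≤ d := by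
  obtain ⟨C, hC⟩ := h
  set B := MvPolynomial σ R ⧸ fiberIdeal x
  have : Nontrivial B := Ideal.Quotient.nontrivial_iff.mpr (fiberIdeal_ne_top x)
  let _ : Field (R ⧸ maximalIdeal R) := Ideal.Quotient.field _
  let _ : Algebra (R ⧸ maximalIdeal R) B :=
    (Ideal.Quotient.lift (maximalIdeal R) (algebraMap R B) fun r hr =>
      Ideal.Quotient.eq_zero_iff_mem.mpr (C_mem_fiberIdeal x hr)).toAlgebra
  have : IsScalarTower R (R ⧸ maximalIdeal R) B := IsScalarTower.of_algebraMap_eq fun r => rfl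
  refine ringKrullDim_le_of_filtration_growth_of_surjective (k := R ⧸ maximalIdeal R)
    Ideal.Quotient.mk_surjective (fiberFiltration_mono x) (C := C * 2 ^ d) (fun y => ?_) fun n => ?_
  · obtain ⟨f, rfl⟩ := Ideal.Quotient.mk_surjective y
    exact ⟨f.totalDegree, mk_mem_fiberFiltration x le_rfl⟩
  · refine (length_fiberFiltration_le (Submodule.fg_span (Set.finite_range x)) n).trans ?_
    exact_mod_cast (hC (n + 1)).trans (by
      calc C * (n + 1 + 1) ^ d ≤ C * (2 * (n + 1)) ^ d := by gcongr; omega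
        _ = C * 2 ^ d * (n + 1) ^ d := by rw [mul_pow, mul_assoc])

attribute [local instance] MvPolynomial.gradedAlgebra

theorem isHomogeneous_fiberIdeal (x : σ → R) :
    (fiberIdeal x).IsHomogeneous (homogeneousSubmodule σ R) := by
  intro i f hf
  have hcomp : homogeneousComponent i f ∈ fiberIdeal x :=
    mem_fiberIdeal_of_isHomogeneous (homogeneousComponent_isHomogeneous i f)
      (coeff_reesMap x f i ▸ hf i)
  rwa [← decomposition.decompose'_apply] at hcomp

theorem exists_idealOfVars_le_radical_fiberIdeal_sup_span [IsNoetherianRing R] [Finite σ]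
    (x : σ → R) {d : ℕ} (hd : ringKrullDim (MvPolynomial σ R ⧸ fiberIdeal x) ≤ d) :
    ∃ s : Finset (MvPolynomial σ R), s.card ≤ d ∧ (∀ z ∈ s, ∃ n > 0, z.IsHomogeneous n) ∧
      idealOfVars σ R ≤ (fiberIdeal x ⊔ Ideal.span (s : Set (MvPolynomial σ R))).radical := by
  obtain ⟨s, hs, hhom, hrad⟩ := exists_irrelevant_le_radical_sup_span
    (homogeneousSubmodule σ R) d (isHomogeneous_fiberIdeal x) fun P _ hP _ =>
      (ringKrullDim_le_of_surjective (Ideal.Quotient.factor hP)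
        (Ideal.Quotient.factor_surjective hP)).trans hd
  refine ⟨s, hs, hhom, (Ideal.span_le.mpr ?_).trans hrad⟩
  rintro _ ⟨j, rfl⟩
  exact HomogeneousIdeal.mem_irrelevant_of_mem _ one_pos (isHomogeneous_X R j)

theorem span_range_pow_le_span_image [IsNoetherianRing R] {x : σ → R}
    {s : Set (MvPolynomial σ R)} (hs : ∀ z ∈ s, ∃ n, z.IsHomogeneous n) {N : ℕ}
    (h : idealOfVars σ R ^ N ≤ fiberIdeal x ⊔ Ideal.span s) :
    Ideal.span (Set.range x) ^ N ≤ Ideal.span (eval x '' s) := by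
  refine Submodule.le_of_le_smul_of_le_jacobson_bot (IsNoetherian.noetherian _)
    (maximalIdeal_le_jacobson _) fun y hy => ?_
  obtain ⟨f, hf, rfl⟩ := (Ideal.mem_span_pow_iff_exists_isHomogeneous x y).mp hy
  have hfX : f ∈ idealOfVars σ R ^ N :=
    (mem_pow_idealOfVars_iff N f).mpr fun c hc =>
      (hf.degree_eq_sum_deg_support hc).trans_le (Finsupp.degree_apply c).ge
  obtain ⟨q, hq, w, hw, rfl⟩ := Submodule.mem_sup.mp (h hfX)
  rw [← Polynomial.coeff_monomial_same N (eval x (q + w)), ← reesMap_of_isHomogeneous x hf,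
    map_add, Polynomial.coeff_add, add_comm]
  exact add_mem (Ideal.mem_sup_left (coeff_reesMap_mem_span_image x hs hw N))
    (Ideal.mem_sup_right (hq N))

end FiberCone

theorem exists_le_radical_of_analyticSpreadLE {R : Type*} [CommRing R] [IsNoetherianRing R]
    [IsLocalRing R] {a : Ideal R} {d : ℕ} (h : AnalyticSpreadLE a d) :
    ∃ J ≤ a, J.spanFinrank ≤ d ∧ a ≤ J.radical := by
  obtain ⟨t, rfl⟩ := IsNoetherian.noetherian a
  obtain ⟨x, hx⟩ : ∃ x : t → R, (t : Set R) = Set.range x := ⟨Subtype.val, by simp⟩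
  rw [hx] at h ⊢
  obtain ⟨s, hcard, hhom, hrad⟩ :=
    exists_idealOfVars_le_radical_fiberIdeal_sup_span x (ringKrullDim_quotient_fiberIdeal_le x h)
  obtain ⟨N, hN⟩ := Ideal.exists_pow_le_of_le_radical_of_fg hrad (IsNoetherian.noetherian _)
  refine ⟨Ideal.span (MvPolynomial.eval x '' s), Ideal.span_le.mpr ?_, ?_, fun y hy => ⟨N, ?_⟩⟩
  · rintro _ ⟨z, hz, rfl⟩
    obtain ⟨n, hn, hzn⟩ := hhom z hz
    exact Ideal.pow_le_self hn.ne'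
      ((Ideal.mem_span_pow_iff_exists_isHomogeneous x _).mpr ⟨z, hzn, rfl⟩)
  · refine (Submodule.spanFinrank_span_le_ncard_of_finite (s.finite_toSet.image _)).trans ?_
    exact (Set.ncard_image_le s.finite_toSet).trans (by rwa [Set.ncard_coe_finset])
  · exact span_range_pow_le_span_image (fun z hz => (hhom z hz).imp fun _ hn => hn.2) hN
      (Ideal.pow_mem_pow hy N)

section PolynomialGrowth

theorem exists_forall_le_mul_pow_of_eventually_le {u : ℕ → ℕ} {c : ℚ} {e : ℕ}
    (h : ∀ᶠ n : ℕ in atTop, (u n : ℚ) ≤ c * (n + 1) ^ e) :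
    ∃ C : ℕ, ∀ n, u n ≤ C * (n + 1) ^ e := by
  obtain ⟨n₀, hn₀⟩ := eventually_atTop.mp h
  refine ⟨∑ k ∈ Finset.range n₀, u k + ⌈c⌉₊, fun n => ?_⟩
  rw [add_mul]
  rcases lt_or_ge n n₀ with hn | hn
  · calc u n ≤ ∑ k ∈ Finset.range n₀, u k :=
          Finset.single_le_sum (fun _ _ => Nat.zero_le _) (Finset.mem_range.mpr hn)
      _ ≤ (∑ k ∈ Finset.range n₀, u k) * (n + 1) ^ e :=
          Nat.le_mul_of_pos_right _ (by positivity)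
      _ ≤ _ := Nat.le_add_right _ _
  · have hceil : (u n : ℚ) ≤ ⌈c⌉₊ * (n + 1) ^ e :=
      (hn₀ n hn).trans (by gcongr; exact Nat.le_ceil c)
    exact le_add_of_le_right (by exact_mod_cast hceil)

theorem eval_natCast_le_sum_abs_coeff_mul_pow {g : Polynomial ℚ} {e : ℕ} (hg : g.natDegree ≤ e)
    (n : ℕ) :
    g.eval (n : ℚ) ≤ (∑ i ∈ Finset.range (e + 1), |g.coeff i|) * ((n : ℚ) + 1) ^ e := by
  rw [Polynomial.eval_eq_sum_range' (Nat.lt_succ_of_le hg), Finset.sum_mul]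
  refine Finset.sum_le_sum fun i hi => mul_le_mul (le_abs_self _) ?_ (by positivity) (abs_nonneg _)
  calc (n : ℚ) ^ i ≤ ((n : ℚ) + 1) ^ i := by gcongr; simp
    _ ≤ ((n : ℚ) + 1) ^ e :=
        pow_le_pow_right₀ (by simp) (Nat.lt_succ_iff.mp (Finset.mem_range.mp hi))

theorem analyticSpreadLE_of_eventually_minGen_le_eval {R : Type*} [CommRing R] [IsNoetherianRing R]
    {a : Ideal R} {g : Polynomial ℚ} {e : ℕ} (hg : g.natDegree ≤ e)
    (h : ∀ᶠ n : ℕ in atTop, (minGen R ↥(a ^ n) : ℚ) ≤ g.eval (n : ℚ)) :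
    AnalyticSpreadLE a (e + 1) := by
  obtain ⟨C, hC⟩ := exists_forall_le_mul_pow_of_eventually_le
    (h.mono fun n hn => hn.trans (eval_natCast_le_sum_abs_coeff_mul_pow hg n))
  refine ⟨C, fun n => ?_⟩
  calc ∑ k ∈ Finset.range n, (a ^ k).spanFinrank ≤ ∑ _k ∈ Finset.range n, C * (n + 1) ^ e :=
        Finset.sum_le_sum fun k hk => by
          rw [← minGen_eq_spanFinrank (IsNoetherian.noetherian _)]
          exact (hC k).trans (by gcongr; exact (Finset.mem_range.mp hk).le)
    _ = n * (C * (n + 1) ^ e) := by rw [Finset.sum_const, Finset.card_range, smul_eq_mul]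
    _ ≤ (n + 1) * (C * (n + 1) ^ e) := Nat.mul_le_mul_right _ n.le_succ
    _ = C * (n + 1) ^ (e + 1) := by ring

theorem analyticSpreadLE_bot {R : Type*} [CommRing R] : AnalyticSpreadLE (⊥ : Ideal R) 0 := by
  have htop : (⊤ : Ideal R).spanFinrank ≤ 1 := by
    rw [← Ideal.span_singleton_one, ← Set.ncard_singleton (1 : R)]
    exact Submodule.spanFinrank_span_le_ncard_of_finite (Set.finite_singleton 1)
  refine ⟨1, fun n => ?_⟩
  rcases n with _ | n
  · simp
  · rw [Finset.sum_range_succ']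
    simpa [Ideal.one_eq_top] using htop

-- For `h = 0` the truncated degree `h - 1` only bounds `μ(a^n)` by a constant; there `a = ⊥`.
theorem analyticSpreadLE_height {R : Type*} [CommRing R] [IsNoetherianRing R] [IsDomain R]
    {a : Ideal R} {h : ℕ} (hh : (h : ℕ∞) = a.height) {g : Polynomial ℚ}
    (hg : g.natDegree ≤ h - 1)
    (hμ : ∀ᶠ n : ℕ in atTop, (minGen R ↥(a ^ n) : ℚ) ≤ g.eval (n : ℚ)) :
    AnalyticSpreadLE a h := by
  rcases h with _ | e
  · obtain rfl := Ideal.height_eq_zero_iff_eq_bot.mp hh.symm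
    exact analyticSpreadLE_bot
  · exact analyticSpreadLE_of_eventually_minGen_le_eval hg hμ

end PolynomialGrowth

theorem ringKrullDim_quotient_le_of_analyticSpreadLE {R : Type*} [CommRing R]
    [IsNoetherianRing R] [IsLocalRing R] {a : Ideal R} (ha : a ≤ maximalIdeal R) {d : ℕ}
    (h : AnalyticSpreadLE a d) (I : Ideal R) :
    ringKrullDim (R ⧸ I) ≤ ringKrullDim (R ⧸ (I ⊔ a)) + d := by
  obtain ⟨J, hJa, hJd, haJ⟩ := exists_le_radical_of_analyticSpreadLE h
  have hJ : J ≤ Ring.jacobson R :=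
    (hJa.trans ha).trans_eq (IsLocalRing.ringJacobson_eq_maximalIdeal R).symm
  calc ringKrullDim (R ⧸ I) ≤ ringKrullDim (R ⧸ (I ⊔ J)) + J.spanFinrank :=
        ringKrullDim_quotient_le_quotient_sup_add_spanFinrank I hJ
    _ ≤ ringKrullDim (R ⧸ (I ⊔ a)) + d :=
        add_le_add (ringKrullDim_quotient_le_of_le_radical (sup_le
          (le_sup_left.trans Ideal.le_radical) (haJ.trans (Ideal.radical_mono le_sup_right))))
          (by exact_mod_cast hJd)

theorem stmt10_general {R : Type*} [CommRing R] [IsNoetherianRing R] [IsLocalRing R]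
    {a b : Ideal R} (hrad : (a ⊔ b).radical = maximalIdeal R) {h : ℕ} (hh : (h : ℕ∞) = a.height)
    (hspread : AnalyticSpreadLE a h)
    (hb : ∀ᶠ n : ℕ in atTop, b ⊓ a ^ n ≤ maximalIdeal R * a ^ n) :
    ringKrullDim (R ⧸ a) + ringKrullDim (R ⧸ b) = ringKrullDim R := by
  have ha : a ≤ maximalIdeal R := hrad ▸ le_sup_left.trans Ideal.le_radical
  have hbm : b ≤ maximalIdeal R := hrad ▸ le_sup_right.trans Ideal.le_radical
  have hdim : ringKrullDim (R ⧸ (b ⊔ a)) ≤ 0 := by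
    let _ : Field (R ⧸ maximalIdeal R) := Ideal.Quotient.field _
    rw [← ringKrullDim_eq_zero_of_field (R ⧸ maximalIdeal R)]
    exact ringKrullDim_quotient_le_of_le_radical (sup_comm a b ▸ hrad.ge)
  have := isLocalRing_quotient (ne_top_of_le_ne_top (maximalIdeal.isMaximal R).ne_top hbm)
  obtain ⟨d, hd⟩ : ∃ d : ℕ, ringKrullDim (R ⧸ b) = d :=
    ⟨_, Order.krullDim_eq_length_of_finiteDimensionalOrder⟩
  have hbh : ringKrullDim (R ⧸ b) ≤ a.height := by
    rw [← hh]
    exact (ringKrullDim_quotient_le_of_analyticSpreadLE ha hspread b).trans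
      (add_le_of_nonpos_left hdim)
  have hRd : ringKrullDim (R ⧸ (⊥ : Ideal R)) ≤ ringKrullDim (R ⧸ (⊥ ⊔ a)) + d :=
    ringKrullDim_quotient_le_of_analyticSpreadLE ha (analyticSpreadLE_of_inf_pow_le hrad hb hd.le) ⊥
  rw [bot_sup_eq, ringKrullDim_eq_of_ringEquiv (RingEquiv.quotientBot R), ← hd] at hRd
  exact le_antisymm ((by gcongr : _ ≤ _).trans (ringKrullDim_quotient_add_height_le a)) hRd

/-- Let `(R, m)` be a regular local ring (noetherian local with maximal
ideal generated by `dim R` elements) and `a`, `b` ideals with `√(a + b) = m`.  Suppose `a`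
is equimultiple — i.e. its analytic spread equals its height `h`, expressed here by
`μ(a^n)` being bounded above and below by polynomials of degree `h − 1` for large `n` —
and `b ∩ a^n ⊆ m·a^n` for all large `n`.  Then `dim(R/a) + dim(R/b) = dim R`. -/
theorem stmt10 (R : Type*) [CommRing R] [IsNoetherianRing R] [IsLocalRing R]
    (hreg : ∃ s : Finset R, (s.card : WithBot ℕ∞) = ringKrullDim R ∧
      Ideal.span (s : Set R) = IsLocalRing.maximalIdeal R)
    (a b : Ideal R)
    (hrad : (a + b).radical = IsLocalRing.maximalIdeal R)
    (h : ℕ) (hh : (h : ℕ∞) = idealHeight a)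
    (hequi : ∃ f g : Polynomial ℚ, f.degree = (h - 1 : ℕ) ∧ g.degree = (h - 1 : ℕ) ∧
      ∀ᶠ n : ℕ in atTop,
        f.eval (n : ℚ) ≤ (minGen R ↥(a ^ n) : ℚ) ∧ (minGen R ↥(a ^ n) : ℚ) ≤ g.eval (n : ℚ))
    (hb : ∀ᶠ n : ℕ in atTop, b ⊓ a ^ n ≤ IsLocalRing.maximalIdeal R * a ^ n) :
    ringKrullDim (R ⧸ a) + ringKrullDim (R ⧸ b) = ringKrullDim R := by
  have := isDomain_of_exists_span_eq_maximalIdeal hreg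
  have ⟨_, _, _, hg, hμ⟩ := hequi
  have hht := hh.trans (idealHeight_eq_height a)
  exact stmt10_general hrad hht
    (analyticSpreadLE_height hht (Polynomial.natDegree_le_of_degree_le hg.le)
      (hμ.mono fun _ hn => hn.2)) hb
end

section
/- Let R be a commutative ring, a = (g₁, ..., g_t) a finitely generated ideal, and L a finitely generated R-module with presentation R^{β₁} → R^{β₀} → L → 0 given by a matrix φ. Then the block matrix (φ | g₁·I_{β₀} | ... | g_t·I_{β₀}), where I_{β₀} is the β₀ × β₀ identity matrix, is a presentation matrix of L/aL as an R-module, and Fitt₀(L/aL) = Σ_{j=0}^{β₀} a^j · Fitt_j(L). -/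
/-- The `j`-th Fitting ideal of a module `M`, defined intrinsically as the ideal generated by
all `(n-j)`-minors of matrices of relations coming from any surjection `R^n → M`.
(This agrees with the classical definition via a presentation matrix, including the
convention `Fitt_j = R` for `j ≥ n`, since the `0 × 0` determinant is `1`.) -/
noncomputable def fittingIdeal (R : Type*) [CommRing R] (M : Type*) [AddCommGroup M]
    [Module R M] (j : ℕ) : Ideal R :=
  Ideal.span { r | ∃ (n : ℕ) (π : (Fin n → R) →ₗ[R] M), Function.Surjective π ∧
    ∃ v : Fin (n - j) → (Fin n → R), (∀ l, v l ∈ LinearMap.ker π) ∧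
      ∃ rows : Fin (n - j) → Fin n,
        r = Matrix.det (Matrix.of fun p q : Fin (n - j) => v q (rows p)) }

/-! A relation matrix of `L` enters its Fitting ideals only through its column space `K`, the kernel
of a surjection `π : Rⁿ → L`: the ideal `Fitt_j(L)` is generated by the values of alternating
`(n - j)`-forms at vectors of `K`. This does not depend on `π`, because for a second surjection
`ρ : Rᵐ → L` the submodules `ker π × Rᵐ` and `Rⁿ × ker ρ` of `Rⁿ × Rᵐ` correspond under an
automorphism, and passing from `K` to `K × Rᵐ` merely shifts the degree of the forms by `m`.

The quotient `L / aL` is presented by `K + aRⁿ`. Expanding an `n`-form at sums of vectors of `K` and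
of `aRⁿ` gives terms in which `j` arguments lie in `aRⁿ`, hence elements of `a^j Fitt_j(L)`.
Conversely, a minor of size `k < n` can be bordered by a column `r eᵢ` with `r ∈ a` and `i` a row
not occurring in it, which multiplies it by `r`. -/

/-- The ideal of all values `f (v₁, …, v_k)` of alternating `k`-forms `f` on `V` at vectors `v_q` of
the submodule `K`. For `V = Rⁿ` it is generated by the `k`-minors of the matrices whose columns lie
in `K`; alternating forms are used instead of minors because they restrict and pull back along
linear maps without any choice of coordinates. -/
def minorIdeal {R V : Type*} [CommRing R] [AddCommGroup V] [Module R V] (K : Submodule R V)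
    (k : ℕ) : Ideal R :=
  Ideal.span {r | ∃ (f : V [⋀^Fin k]→ₗ[R] R) (v : Fin k → V), (∀ q, v q ∈ K) ∧ f v = r}

/-- The alternating form `v ↦ det (ℓ p (v q))`, that is, the wedge product of the linear forms
`ℓ p`. The vectors index the rows of the matrix. -/
def detForm {R V ι : Type*} [CommRing R] [AddCommGroup V] [Module R V] [Fintype ι] [DecidableEq ι]
    (ℓ : ι → V →ₗ[R] R) : V [⋀^ι]→ₗ[R] R :=
  Matrix.detRowAlternating.compLinearMap (LinearMap.pi ℓ)

/-- The alternating form in the arguments indexed by `S` obtained from `f` by fixing the arguments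
outside `S` at the values of `v`. -/
def restrictArgs {R V N ι : Type*} [CommRing R] [AddCommGroup V] [Module R V] [AddCommGroup N]
    [Module R N] [DecidableEq ι] (f : V [⋀^ι]→ₗ[R] N) (v : ι → V) (S : Finset ι) :
    V [⋀^S]→ₗ[R] N where
  __ := f.toMultilinearMap.domDomRestrict (· ∈ S) fun i => v i
  map_eq_zero_of_eq' w i j hw hij := by
    refine f.map_eq_zero_of_eq _ (i := i) (j := j) ?_ (Subtype.coe_injective.ne hij)
    simpa using hw

section MultilinearMap

variable {R V N ι : Type*} [CommRing R] [AddCommGroup V] [Module R V] [AddCommGroup N] [Module R N]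

theorem multilinearMap_mem_pow_card_smul (f : MultilinearMap R (fun _ : ι => V) N) (a : Ideal R)
    (P : Submodule R N) (T : Finset ι) (z : ι → V) (hz : ∀ i ∈ T, z i ∈ a • (⊤ : Submodule R V))
    (hf : ∀ w : ι → V, (∀ i ∉ T, w i = z i) → f w ∈ P) : f z ∈ a ^ T.card • P := by
  classical
  induction T using Finset.induction_on generalizing z with
  | empty => simpa using hf z fun _ _ => rfl
  | insert i T hi ih =>
    have key : a • (⊤ : Submodule R V) ≤ (a ^ (T.card + 1) • P).comap (f.toLinearMap z i) := by
      refine Submodule.smul_le.2 fun r hr x _ => ?_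
      have hx : f (Function.update z i x) ∈ a ^ T.card • P := by
        refine ih _ (fun j hj => ?_) fun w hw => hf w fun j hj => ?_
        · have hji : j ≠ i := ne_of_mem_of_not_mem hj hi
          simpa only [Function.update_of_ne hji] using hz j (Finset.mem_insert_of_mem hj)
        · obtain ⟨hji, hjT⟩ : j ≠ i ∧ j ∉ T := by simpa using hj
          rw [hw j hjT, Function.update_of_ne hji]
      rw [Submodule.mem_comap, map_smul, pow_succ', mul_smul]
      exact Submodule.smul_mem_smul hr hx
    have hzi := key (hz i (Finset.mem_insert_self i T))
    rwa [Submodule.mem_comap, MultilinearMap.toLinearMap_apply, Function.update_eq_self,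
      ← Finset.card_insert_of_notMem hi] at hzi

end MultilinearMap

section MinorIdeal

variable {R V W : Type*} [CommRing R] [AddCommGroup V] [Module R V] [AddCommGroup W] [Module R W]

theorem detForm_apply {ι : Type*} [Fintype ι] [DecidableEq ι] (ℓ : ι → V →ₗ[R] R) (v : ι → V) :
    detForm ℓ v = (Matrix.of fun q p => ℓ p (v q)).det := rfl

theorem map_mem_minorIdeal {ι : Type*} (f : V [⋀^ι]→ₗ[R] R) {K : Submodule R V} {v : ι → V}
    {S : Finset ι} (hv : ∀ i ∈ S, v i ∈ K) : f v ∈ minorIdeal K S.card := by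
  classical
  refine Ideal.subset_span ⟨(restrictArgs f v S).domDomCongr S.equivFin,
    fun q => v (S.equivFin.symm q), fun q => hv _ (S.equivFin.symm q).2, ?_⟩
  change f _ = f v
  congr 1
  ext i
  simp

theorem minorIdeal_antitone (K : Submodule R V) : Antitone (minorIdeal K) := by
  intro k l hkl
  refine Ideal.span_le.2 ?_
  rintro _ ⟨f, v, hv, rfl⟩
  simpa using map_mem_minorIdeal f (S := Finset.univ.map (Fin.castLEEmb hkl)) fun i _ => hv i

theorem minorIdeal_mono {K K' : Submodule R V} (h : K ≤ K') (k : ℕ) :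
    minorIdeal K k ≤ minorIdeal K' k :=
  Ideal.span_mono fun _ ⟨f, v, hv, hr⟩ => ⟨f, v, fun q => h (hv q), hr⟩

theorem minorIdeal_map_le (e : V →ₗ[R] W) (K : Submodule R V) (k : ℕ) :
    minorIdeal (K.map e) k ≤ minorIdeal K k := by
  refine Ideal.span_le.2 ?_
  rintro _ ⟨f, v, hv, rfl⟩
  choose w hwK hw using hv
  obtain rfl : v = fun q => e (w q) := funext fun q => (hw q).symm
  exact Ideal.subset_span ⟨f.compLinearMap e, w, hwK, rfl⟩

theorem minorIdeal_sup_le {K K' : Submodule R V} {k : ℕ} {J : Ideal R}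
    (h : ∀ (f : V [⋀^Fin k]→ₗ[R] R) (S : Finset (Fin k)) (z : Fin k → V),
      (∀ i ∈ S, z i ∈ K) → (∀ i ∉ S, z i ∈ K') → f z ∈ J) :
    minorIdeal (K ⊔ K') k ≤ J := by
  refine Ideal.span_le.2 ?_
  rintro _ ⟨f, v, hv, rfl⟩
  choose x hx y hy hxy using fun q => Submodule.mem_sup.1 (hv q)
  obtain rfl : v = x + y := funext fun q => (hxy q).symm
  rw [SetLike.mem_coe, ← AlternatingMap.coe_multilinearMap, MultilinearMap.map_add_univ]
  refine Ideal.sum_mem _ fun S _ => h f S _ (fun i hi => ?_) fun i hi => ?_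
  · simpa only [Finset.piecewise_eq_of_mem _ _ _ hi] using hx i
  · simpa only [Finset.piecewise_eq_of_notMem _ _ _ hi] using hy i

theorem minorIdeal_sup_smul_top_le (K : Submodule R V) (a : Ideal R) (n : ℕ) :
    minorIdeal (K ⊔ a • (⊤ : Submodule R V)) n ≤
      ∑ j ∈ Finset.range (n + 1), a ^ j * minorIdeal K (n - j) := by
  refine minorIdeal_sup_le fun f S z hK ha => ?_
  have hz : f z ∈ a ^ Sᶜ.card * minorIdeal K S.card := by
    refine multilinearMap_mem_pow_card_smul f.toMultilinearMap a (minorIdeal K S.card) Sᶜ z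
      (fun i hi => ha i (Finset.mem_compl.1 hi)) fun w hw => map_mem_minorIdeal f fun i hi => ?_
    rw [hw i (by simpa using hi)]
    exact hK i hi
  have hcard : S.card + Sᶜ.card = n := by simp
  rw [show S.card = n - Sᶜ.card by omega] at hz
  rw [Ideal.sum_eq_sup]
  exact Finset.le_sup (f := fun j => a ^ j * minorIdeal K (n - j))
    (Finset.mem_range.2 (by omega)) hz

theorem det_mul_det_mem_minorIdeal {ι κ : Type*} [Fintype ι] [DecidableEq ι] [Fintype κ]
    [DecidableEq κ] {K : Submodule R V} (ℓ : ι → V →ₗ[R] R) (g : κ → V →ₗ[R] R) {x : ι → V}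
    {v : κ → V} (hx : ∀ i, x i ∈ K) (hv : ∀ q, v q ∈ K) (hgx : ∀ p i, g p (x i) = 0) :
    (Matrix.of fun i j => ℓ j (x i)).det * (Matrix.of fun q p => g p (v q)).det ∈
      minorIdeal K (Fintype.card ι + Fintype.card κ) := by
  have hblock : (Matrix.of fun q p => Sum.elim ℓ g p (Sum.elim x v q)) =
      Matrix.fromBlocks (Matrix.of fun i j => ℓ j (x i)) 0
        (Matrix.of fun q j => ℓ j (v q)) (Matrix.of fun q p => g p (v q)) := by
    ext (i | q) (j | p) <;> simp [hgx]
  have hmem := map_mem_minorIdeal (detForm (Sum.elim ℓ g)) (v := Sum.elim x v) (K := K)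
    (S := Finset.univ) fun i _ => by cases i <;> simp [hx, hv]
  rwa [detForm_apply, hblock, Matrix.det_fromBlocks_zero₁₂, Finset.card_univ,
    Fintype.card_sum] at hmem

end MinorIdeal

section Free

open Module

variable {R V W : Type*} [CommRing R] [AddCommGroup V] [Module R V] [AddCommGroup W] [Module R W]
variable {ι κ : Type*}

theorem alternatingMap_apply_mem_of_det_mem (b : Basis ι R V) {k : ℕ} (f : V [⋀^Fin k]→ₗ[R] R)
    (v : Fin k → V) {J : Ideal R}
    (h : ∀ s : Fin k ↪ ι, (Matrix.of fun q p => b.coord (s p) (v q)).det ∈ J) : f v ∈ J := by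
  classical
  let : LinearOrder ι := linearOrderOfSTO WellOrderingRel
  rw [← exteriorPower.alternatingMapLinearEquiv_apply_ιMulti,
    ← (b.exteriorPower k).linearCombination_repr (exteriorPower.ιMulti R k v),
    Finsupp.linearCombination_apply, Finsupp.sum, map_sum]
  refine Ideal.sum_mem _ fun s _ => ?_
  rw [map_smul, exteriorPower.basis_repr_apply, exteriorPower.ιMultiDual_apply_ιMulti]
  exact Ideal.mul_mem_right _ _ (h (Set.powersetCard.ofFinEmbEquiv.symm s).toEmbedding)

theorem minorIdeal_le_iff (b : Basis ι R V) {K : Submodule R V} {k : ℕ} {J : Ideal R} :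
    minorIdeal K k ≤ J ↔ ∀ v : Fin k → V, (∀ q, v q ∈ K) → ∀ s : Fin k ↪ ι,
      (Matrix.of fun q p => b.coord (s p) (v q)).det ∈ J := by
  refine ⟨fun h v hv s => h (Ideal.subset_span ⟨detForm fun p => b.coord (s p), v, hv, rfl⟩),
    fun h => Ideal.span_le.2 ?_⟩
  rintro _ ⟨f, v, hv, rfl⟩
  exact alternatingMap_apply_mem_of_det_mem b f v (h v hv)

theorem minorIdeal_eq_bot_of_card_lt [Fintype ι] (b : Basis ι R V) (K : Submodule R V) {k : ℕ}
    (hk : Fintype.card ι < k) : minorIdeal K k = ⊥ := by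
  refine eq_bot_iff.2 ((minorIdeal_le_iff b).2 fun v _ s => absurd hk ?_)
  simpa using Fintype.card_le_of_embedding s

theorem minorIdeal_prod_top_le [Fintype κ] (c : Basis κ R W) (K : Submodule R V) (k : ℕ) :
    minorIdeal (K.prod (⊤ : Submodule R W)) k ≤ minorIdeal K (k - Fintype.card κ) := by
  rw [LinearMap.prod_eq_sup_map]
  refine minorIdeal_sup_le fun f S z hS hSc => ?_
  have hcard : S.card + Sᶜ.card = k := by simp
  rcases le_or_gt Sᶜ.card (Fintype.card κ) with h | h
  · exact minorIdeal_antitone K (by omega) (minorIdeal_map_le _ K _ (map_mem_minorIdeal f hS))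
  · have hz := minorIdeal_map_le _ ⊤ _ <|
      map_mem_minorIdeal f (S := Sᶜ) fun i hi => hSc i (Finset.mem_compl.1 hi)
    rw [minorIdeal_eq_bot_of_card_lt c _ h] at hz
    exact bot_le (a := minorIdeal K _) hz

theorem le_minorIdeal_prod_top [Free R V] [Fintype κ] (c : Basis κ R W) (K : Submodule R V)
    (k : ℕ) :
    minorIdeal K k ≤ minorIdeal (K.prod (⊤ : Submodule R W)) (Fintype.card κ + k) := by
  classical
  let b := Free.chooseBasis R V
  refine (minorIdeal_le_iff b).2 fun v hv s => ?_
  have hmem := det_mul_det_mem_minorIdeal (K := K.prod (⊤ : Submodule R W))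
    (fun i => (c.coord i).comp (LinearMap.snd R V W))
    (fun p => (b.coord (s p)).comp (LinearMap.fst R V W))
    (x := fun i => (0, c i)) (v := fun q => (v q, 0)) (by simp) (by simpa using hv) (by simp)
  have hone : (Matrix.of fun i j => c.coord j (c i)) = 1 := by
    ext i j
    simp [Finsupp.single_apply, Matrix.one_apply]
  simpa only [LinearMap.comp_apply, LinearMap.snd_apply, LinearMap.fst_apply, hone,
    Matrix.det_one, one_mul, Fintype.card_fin] using hmem

theorem minorIdeal_prod_top [Free R V] [Fintype κ] (c : Basis κ R W) (K : Submodule R V) (k : ℕ) :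
    minorIdeal (K.prod (⊤ : Submodule R W)) k = minorIdeal K (k - Fintype.card κ) :=
  le_antisymm (minorIdeal_prod_top_le c K k) <|
    (le_minorIdeal_prod_top c K _).trans (minorIdeal_antitone _ (by omega))

theorem mul_minorIdeal_le [Fintype ι] (b : Basis ι R V) {K : Submodule R V} {a : Ideal R}
    (ha : a • (⊤ : Submodule R V) ≤ K) {k : ℕ} (hk : k < Fintype.card ι) :
    a * minorIdeal K k ≤ minorIdeal K (1 + k) := by
  refine Ideal.mul_le.2 fun r hr x hx => ?_
  suffices h : minorIdeal K k ≤ Submodule.comap (LinearMap.mulLeft R r) (minorIdeal K (1 + k)) from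
    h hx
  refine (minorIdeal_le_iff b).2 fun v hv s => ?_
  obtain ⟨i, hi⟩ : ∃ i, ∀ p, s p ≠ i := by
    by_contra! hs
    exact hk.not_ge (by simpa using Fintype.card_le_of_surjective s hs)
  have hmem := det_mul_det_mem_minorIdeal (K := K) (fun _ : Unit => b.coord i)
    (fun p => b.coord (s p)) (x := fun _ => r • b i) (v := v)
    (fun _ => ha (Submodule.smul_mem_smul hr Submodule.mem_top)) hv fun p _ => by simp [(hi p).symm]
  simpa using hmem

theorem pow_mul_minorIdeal_le [Fintype ι] (b : Basis ι R V) {K : Submodule R V} {a : Ideal R}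
    (ha : a • (⊤ : Submodule R V) ≤ K) {j k : ℕ} (hjk : j + k ≤ Fintype.card ι) :
    a ^ j * minorIdeal K k ≤ minorIdeal K (j + k) := by
  induction j with
  | zero => simp
  | succ j ih =>
    calc a ^ (j + 1) * minorIdeal K k = a * (a ^ j * minorIdeal K k) := by rw [pow_succ', mul_assoc]
      _ ≤ a * minorIdeal K (j + k) := Ideal.mul_mono_right (ih (by omega))
      _ ≤ minorIdeal K (1 + (j + k)) := mul_minorIdeal_le b ha (by omega)
      _ = minorIdeal K (j + 1 + k) := by rw [add_comm 1, add_right_comm]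

theorem minorIdeal_sup_smul_top [Fintype ι] (b : Basis ι R V) (K : Submodule R V) (a : Ideal R) :
    minorIdeal (K ⊔ a • (⊤ : Submodule R V)) (Fintype.card ι) =
      ∑ j ∈ Finset.range (Fintype.card ι + 1), a ^ j * minorIdeal K (Fintype.card ι - j) := by
  refine le_antisymm (minorIdeal_sup_smul_top_le K a _) ?_
  rw [Ideal.sum_eq_sup]
  refine Finset.sup_le fun j hj => ?_
  have hj' : j + (Fintype.card ι - j) = Fintype.card ι := by
    have := Finset.mem_range.1 hj
    omega
  calc a ^ j * minorIdeal K (Fintype.card ι - j)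
      ≤ a ^ j * minorIdeal (K ⊔ a • ⊤) (Fintype.card ι - j) :=
        Ideal.mul_mono_right (minorIdeal_mono le_sup_left _)
    _ ≤ minorIdeal (K ⊔ a • ⊤) (j + (Fintype.card ι - j)) :=
        pow_mul_minorIdeal_le b le_sup_right hj'.le
    _ = minorIdeal (K ⊔ a • ⊤) (Fintype.card ι) := by rw [hj']

end Free

section Presentation

open Module

variable {R V W M : Type*} [CommRing R] [AddCommGroup V] [Module R V] [AddCommGroup W] [Module R W]
  [AddCommGroup M] [Module R M]

-- Both submodules are sheared copies of the kernel of `π + ρ` on `V × W`, as in Schanuel's lemma.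
theorem minorIdeal_ker_prod_top_le [Projective R V] [Projective R W] {π : V →ₗ[R] M}
    {ρ : W →ₗ[R] M} (hπ : Function.Surjective π) (hρ : Function.Surjective ρ) (k : ℕ) :
    minorIdeal ((LinearMap.ker π).prod (⊤ : Submodule R W)) k ≤
      minorIdeal ((LinearMap.ker ρ).prod (⊤ : Submodule R V)) k := by
  obtain ⟨A, hA⟩ := projective_lifting_property ρ π hρ
  obtain ⟨B, hB⟩ := projective_lifting_property π ρ hπ
  have hρA : ∀ x, ρ (A x) = π x := LinearMap.congr_fun hA
  have hπB : ∀ y, π (B y) = ρ y := LinearMap.congr_fun hB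
  let u : W × V →ₗ[R] W := LinearMap.fst R W V - A.comp (LinearMap.snd R W V)
  let e : W × V →ₗ[R] V × W := (LinearMap.snd R W V + B.comp u).prod u
  refine (minorIdeal_mono ?_ k).trans (minorIdeal_map_le e _ k)
  rintro ⟨x, y⟩ ⟨hx, -⟩
  have hx : π x = 0 := LinearMap.mem_ker.1 hx
  refine ⟨(y + A (x - B y), x - B y), ⟨?_, Submodule.mem_top⟩, ?_⟩
  · simp [hρA, hπB, hx]
  · simp [e, u]

theorem minorIdeal_ker_eq {ι κ : Type*} [Fintype ι] [Fintype κ] (b : Basis ι R V)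
    (c : Basis κ R W) {π : V →ₗ[R] M} {ρ : W →ₗ[R] M} (hπ : Function.Surjective π)
    (hρ : Function.Surjective ρ) (j : ℕ) :
    minorIdeal (LinearMap.ker π) (Fintype.card ι - j) =
      minorIdeal (LinearMap.ker ρ) (Fintype.card κ - j) := by
  have := Free.of_basis b
  have := Free.of_basis c
  have hprod := le_antisymm
    (minorIdeal_ker_prod_top_le hπ hρ (Fintype.card ι + Fintype.card κ - j))
    (minorIdeal_ker_prod_top_le hρ hπ (Fintype.card ι + Fintype.card κ - j))
  rw [minorIdeal_prod_top c, minorIdeal_prod_top b] at hprod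
  convert hprod using 2 <;> omega

theorem fittingIdeal_eq_minorIdeal_ker {n : ℕ} {π : (Fin n → R) →ₗ[R] M}
    (hπ : Function.Surjective π) (j : ℕ) :
    fittingIdeal R M j = minorIdeal (LinearMap.ker π) (n - j) := by
  refine le_antisymm (Ideal.span_le.2 ?_) ?_
  · rintro _ ⟨m, ρ, hρ, v, hv, rows, rfl⟩
    have hker : minorIdeal (LinearMap.ker ρ) (m - j) = minorIdeal (LinearMap.ker π) (n - j) := by
      simpa using minorIdeal_ker_eq (Pi.basisFun R (Fin m)) (Pi.basisFun R (Fin n)) hρ hπ j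
    rw [← hker, ← Matrix.det_transpose]
    exact Ideal.subset_span ⟨detForm fun p => LinearMap.proj (rows p), v, hv, rfl⟩
  · refine (minorIdeal_le_iff (Pi.basisFun R (Fin n))).2 fun v hv s => ?_
    rw [← Matrix.det_transpose]
    exact Ideal.subset_span ⟨n, π, hπ, v, hv, s, rfl⟩

theorem ker_mkQ_smul_top_comp (a : Ideal R) {π : V →ₗ[R] M} (hπ : Function.Surjective π) :
    LinearMap.ker ((Submodule.mkQ (a • (⊤ : Submodule R M))).comp π) =
      LinearMap.ker π ⊔ a • (⊤ : Submodule R V) := by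
  rw [LinearMap.ker_comp, Submodule.ker_mkQ, sup_comm, ← Submodule.comap_map_eq,
    Submodule.map_smul'', Submodule.map_top, LinearMap.range_eq_top.2 hπ]

theorem span_smul_top_eq_span_col {ι κ : Type*} [Finite κ] [DecidableEq κ] (g : ι → R) :
    Ideal.span (Set.range g) • (⊤ : Submodule R (κ → R)) = Submodule.span R
      (Set.range (Matrix.of fun i (c : ι × κ) => if i = c.2 then g c.1 else 0).col) := by
  have hcol (l : ι) (k : κ) : g l • Pi.basisFun R κ k = fun i => if i = k then g l else 0 := by
    ext i
    simp [Pi.single_apply]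
  rw [← (Pi.basisFun R κ).span_eq, Ideal.span, Submodule.span_smul_span]
  congr 1
  ext x
  simp only [Set.mem_smul, Set.mem_range, exists_exists_eq_and, Prod.exists, hcol]
  rfl

end Presentation

theorem stmt19_general {R L ι κ : Type*} [CommRing R] [AddCommGroup L] [Module R L] {n : ℕ}
    (g : ι → R) (φ : Matrix (Fin n) κ R) {π : (Fin n → R) →ₗ[R] L} (hπ : Function.Surjective π)
    (hker : LinearMap.ker π = Submodule.span R (Set.range φ.col)) :
    LinearMap.ker ((Submodule.mkQ (Ideal.span (Set.range g) • (⊤ : Submodule R L))).comp π) =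
      Submodule.span R (Set.range (Matrix.fromCols φ
        (Matrix.of fun i (c : ι × Fin n) => if i = c.2 then g c.1 else 0)).col) ∧
    fittingIdeal R (L ⧸ (Ideal.span (Set.range g) • (⊤ : Submodule R L))) 0 =
      ∑ j ∈ Finset.range (n + 1), Ideal.span (Set.range g) ^ j * fittingIdeal R L j := by
  have hquot := ker_mkQ_smul_top_comp (Ideal.span (Set.range g)) hπ
  constructor
  · rw [hquot, hker, span_smul_top_eq_span_col, ← Submodule.span_union, ← Set.Sum.elim_range]
    congr 2
    ext (c | c) i <;> rfl
  · have hsurj := (Submodule.mkQ_surjective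
      (Ideal.span (Set.range g) • (⊤ : Submodule R L))).comp hπ
    rw [fittingIdeal_eq_minorIdeal_ker (π := (Submodule.mkQ _).comp π) hsurj, hquot, Nat.sub_zero]
    simpa only [fittingIdeal_eq_minorIdeal_ker hπ, Fintype.card_fin] using
      minorIdeal_sup_smul_top (Pi.basisFun R (Fin n)) (LinearMap.ker π) (Ideal.span (Set.range g))

/-- Let `R` be a commutative ring, `a = (g₁, …, g_t)` a finitely
generated ideal, and `L` a finitely generated `R`-module with presentation
`R^{β₁} → R^{β₀} → L → 0` given by the matrix `φ`.  Then the block matrix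
`(φ | g₁·I_{β₀} | … | g_t·I_{β₀})` is a presentation matrix of `L/aL` as an `R`-module,
and `Fitt₀(L/aL) = Σ_{j=0}^{β₀} a^j · Fitt_j(L)`. -/
theorem stmt19 (R : Type*) [CommRing R] (t : ℕ) (g : Fin t → R)
    (a : Ideal R) (ha : a = Ideal.span (Set.range g))
    (β₀ β₁ : ℕ) (L : Type*) [AddCommGroup L] [Module R L] [Module.Finite R L]
    (φ : Matrix (Fin β₀) (Fin β₁) R)
    (π : (Fin β₀ → R) →ₗ[R] L) (hπ : Function.Surjective π)
    (hker : LinearMap.ker π = LinearMap.range (Matrix.toLin' φ)) :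
    LinearMap.ker ((Submodule.mkQ (a • (⊤ : Submodule R L))).comp π) =
      LinearMap.range (Matrix.toLin'
        (Matrix.of fun (i : Fin β₀) (c : Fin β₁ ⊕ Fin t × Fin β₀) =>
          match c with
          | Sum.inl j => φ i j
          | Sum.inr (l, kk) => if i = kk then g l else 0)) ∧
    fittingIdeal R (L ⧸ (a • (⊤ : Submodule R L))) 0 =
      ∑ j ∈ Finset.range (β₀ + 1), a ^ j * fittingIdeal R L j := by
  subst ha
  simp only [Matrix.range_toLin'] at hker ⊢
  convert stmt19_general g φ hπ hker using 5
  ext i (_ | _) <;> rfl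
end
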